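/- arXiv:1912.02840 — 3 statements merged into one kernel-verified Lean document; each statement's English description precedes it below -/
import Mathlib

section
/- Consider the map sending an interval representation M(a,b) of Q to the segment γ(a−1, b) of P(Q). This map restricts to a bijection from the set {H(α), C(α) : α an arrow of Q} onto: (a) the set of all boundary edges of P(Q) except γ(0, n+2), if Q is linearly oriented; (b) the set of all boundary edges of P(Q), if Q is not linearly oriented. -/
open scoped Classical

noncomputable section

namespace CambrianA

/-! ### Combinatorics of a type `A_{n+2}` quiver.

Vertices are `1, …, n+2`.  For `1 ≤ i ≤ n+1`, `ε i = true` means that the arrow between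
`i` and `i+1` is oriented `i → i+1` (`i` is *upper-barred*), and `ε i = false` means it is
oriented `(i+1) → i` (`i` is *lower-barred*). -/

/-- `MaxIncr n ε i j` : the path `i → i+1 → ⋯ → j` is a maximal increasing path of `Q`. -/
def MaxIncr (n : ℕ) (ε : ℕ → Bool) (i j : ℕ) : Prop :=
  1 ≤ i ∧ i ≤ j ∧ j ≤ n + 2 ∧ (∀ ℓ, i ≤ ℓ → ℓ < j → ε ℓ = true) ∧
    (i = 1 ∨ ε (i - 1) = false) ∧ (j = n + 2 ∨ ε j = false)

/-- `MaxDecr n ε i j` : the path `i → i-1 → ⋯ → j` is a maximal decreasing path of `Q`. -/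
def MaxDecr (n : ℕ) (ε : ℕ → Bool) (i j : ℕ) : Prop :=
  1 ≤ j ∧ j ≤ i ∧ i ≤ n + 2 ∧ (∀ ℓ, j ≤ ℓ → ℓ < i → ε ℓ = false) ∧
    (i = n + 2 ∨ ε i = true) ∧ (j = 1 ∨ ε (j - 1) = true)

/-- Vertices of the polygon lying on the lower boundary: `0`, `n+2` and lower-barred ones. -/
def LowerVertex (n : ℕ) (ε : ℕ → Bool) (x : ℕ) : Prop :=
  x = 0 ∨ x = n + 2 ∨ (1 ≤ x ∧ x ≤ n + 1 ∧ ε x = false)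

/-- Vertices of the polygon lying on the upper boundary: `0`, `n+2` and upper-barred ones. -/
def UpperVertex (n : ℕ) (ε : ℕ → Bool) (x : ℕ) : Prop :=
  x = 0 ∨ x = n + 2 ∨ (1 ≤ x ∧ x ≤ n + 1 ∧ ε x = true)

/-- `(a,b)` is a lower boundary edge: `a < b` are consecutive lower vertices. -/
def LowerEdge (n : ℕ) (ε : ℕ → Bool) (a b : ℕ) : Prop :=
  LowerVertex n ε a ∧ LowerVertex n ε b ∧ a < b ∧
    ∀ c, LowerVertex n ε c → ¬(a < c ∧ c < b)

/-- `(a,b)` is an upper boundary edge: `a < b` are consecutive upper vertices. -/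
def UpperEdge (n : ℕ) (ε : ℕ → Bool) (a b : ℕ) : Prop :=
  UpperVertex n ε a ∧ UpperVertex n ε b ∧ a < b ∧
    ∀ c, UpperVertex n ε c → ¬(a < c ∧ c < b)

def BoundaryEdge (n : ℕ) (ε : ℕ → Bool) (a b : ℕ) : Prop :=
  LowerEdge n ε a b ∨ UpperEdge n ε a b

/-- `IsHook n ε a lo hi` : the hook of the arrow of `Q` between `a` and `a+1` is the
maximal path supported on the interval `[lo, hi]`.
If `ε a = true` (arrow `a → a+1`, source `a`), the hook is the maximal decreasing path
starting at `a`; if `ε a = false` (arrow `a+1 → a`, source `a+1`), the hook is the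
maximal increasing path starting at `a+1`. -/
def IsHook (n : ℕ) (ε : ℕ → Bool) (a lo hi : ℕ) : Prop :=
  if ε a = true then
    hi = a ∧ 1 ≤ lo ∧ lo ≤ a ∧ (∀ ℓ, lo ≤ ℓ → ℓ < a → ε ℓ = false) ∧
      (lo = 1 ∨ ε (lo - 1) = true)
  else
    lo = a + 1 ∧ a + 1 ≤ hi ∧ hi ≤ n + 2 ∧ (∀ ℓ, a + 1 ≤ ℓ → ℓ < hi → ε ℓ = true) ∧
      (hi = n + 2 ∨ ε hi = false)

/-- `IsCohook n ε a lo hi` : the cohook of the arrow of `Q` between `a` and `a+1` is the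
maximal path supported on the interval `[lo, hi]`, ending at the target of the arrow. -/
def IsCohook (n : ℕ) (ε : ℕ → Bool) (a lo hi : ℕ) : Prop :=
  if ε a = true then
    lo = a + 1 ∧ a + 1 ≤ hi ∧ hi ≤ n + 2 ∧ (∀ ℓ, a + 1 ≤ ℓ → ℓ < hi → ε ℓ = false) ∧
      (hi = n + 2 ∨ ε hi = true)
  else
    hi = a ∧ 1 ≤ lo ∧ lo ≤ a ∧ (∀ ℓ, lo ≤ ℓ → ℓ < a → ε ℓ = true) ∧
      (lo = 1 ∨ ε (lo - 1) = false)

/-- Counterclockwise neighbor `R⁻¹(ℓ)` of the vertex `ℓ` of the polygon `P(Q)`, for the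
cyclic order `0`, lower-barred vertices increasing, `n+2`, upper-barred vertices
decreasing. -/
def Rinv (n : ℕ) (ε : ℕ → Bool) (ℓ : ℕ) : ℕ :=
  if ℓ = n + 2 then sSup ({0} ∪ {x | 1 ≤ x ∧ x ≤ n + 1 ∧ ε x = true})
  else if 1 ≤ ℓ ∧ ℓ ≤ n + 1 ∧ ε ℓ = true then
    sSup ({0} ∪ {x | 1 ≤ x ∧ x < ℓ ∧ ε x = true})
  else
    sInf ({n + 2} ∪ {x | ℓ < x ∧ x ≤ n + 1 ∧ ε x = false})

/-- `γ(i′,j′)` is a pivot of `γ(i,j)`. -/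
def IsPivot (n : ℕ) (ε : ℕ → Bool) (i j i' j' : ℕ) : Prop :=
  (i' = Rinv n ε i ∧ j' = j ∧ Rinv n ε i < j) ∨
    (i' = i ∧ j' = Rinv n ε j ∧ i < Rinv n ε j)

/-! ### Geometry of the polygon `P(Q)`.

The plane is identified with `ℂ`; `p x` is the vertex of the polygon labeled `x`,
for `0 ≤ x ≤ n+2`. -/

/-- The hypotheses on the points `p 0, …, p (n+2)` realizing the polygon `P(Q)`:
strictly increasing `x`-coordinates; `p 0` and `p (n+2)` on a common horizontal line `L`;
upper-barred vertices above `L`, lower-barred vertices below `L`; convex position. -/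
def PolyPts (n : ℕ) (ε : ℕ → Bool) (p : ℕ → ℂ) : Prop :=
  (∀ a b, a < b → b ≤ n + 2 → (p a).re < (p b).re) ∧
    (p (n + 2)).im = (p 0).im ∧
    (∀ i, 1 ≤ i → i ≤ n + 1 →
      (ε i = true → (p 0).im < (p i).im) ∧ (ε i = false → (p i).im < (p 0).im)) ∧
    ∀ i, i ≤ n + 2 → p i ∉ convexHull ℝ (p '' {j | j ≤ n + 2 ∧ j ≠ i})

/-- The line segment `γ(e.1, e.2)` of the polygon. -/
def Seg (p : ℕ → ℂ) (e : ℕ × ℕ) : Set ℂ := segment ℝ (p e.1) (p e.2)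

/-- Two segments cross when they intersect in a point that is not a common endpoint. -/
def Cross (p : ℕ → ℂ) (e f : ℕ × ℕ) : Prop :=
  ∃ z, z ∈ Seg p e ∧ z ∈ Seg p f ∧
    ¬((z = p e.1 ∨ z = p e.2) ∧ (z = p f.1 ∨ z = p f.2))

/-- Slope of the segment `γ(e.1, e.2)`. -/
def slope (p : ℕ → ℂ) (e : ℕ × ℕ) : ℝ :=
  ((p e.2).im - (p e.1).im) / ((p e.2).re - (p e.1).re)

def ValidPair (n : ℕ) (e : ℕ × ℕ) : Prop := e.1 < e.2 ∧ e.2 ≤ n + 2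

/-- A triangulation of `P(Q)`: a maximal collection of pairwise noncrossing segments. -/
def IsTriangulation (n : ℕ) (p : ℕ → ℂ) (T : Finset (ℕ × ℕ)) : Prop :=
  (∀ e ∈ T, ValidPair n e) ∧ (∀ e ∈ T, ∀ f ∈ T, e ≠ f → ¬Cross p e f) ∧
    ∀ e, ValidPair n e → e ∉ T → ∃ f ∈ T, Cross p e f

/-- Cross product of two planar vectors; positive iff `(u, v)` is counterclockwise. -/
def cross2 (u v : ℂ) : ℝ := u.re * v.im - u.im * v.re

/-- Arrows of the adjacency quiver `Q(T)` of a triangulation `T`: `e → f` whenever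
`e` and `f` are sides of a common triangle of `T` and `f` follows `e` going
counterclockwise around that triangle. -/
def TriArrow (p : ℕ → ℂ) (T : Finset (ℕ × ℕ)) (e f : ℕ × ℕ) : Prop :=
  ∃ a b c : ℕ, a < b ∧ b < c ∧ (a, b) ∈ T ∧ (b, c) ∈ T ∧ (a, c) ∈ T ∧
    ((0 < cross2 (p b - p a) (p c - p a) ∧
        ((e = (a, b) ∧ f = (b, c)) ∨ (e = (b, c) ∧ f = (a, c)) ∨
          (e = (a, c) ∧ f = (a, b)))) ∨
      (cross2 (p b - p a) (p c - p a) < 0 ∧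
        ((e = (a, c) ∧ f = (b, c)) ∨ (e = (b, c) ∧ f = (a, b)) ∨
          (e = (a, b) ∧ f = (a, c)))))

/-! ### Representations of `Q` -/

/-- A finite dimensional representation of the quiver `Q` of type `A_{n+2}` over `k`.
The vector spaces are indexed by `ℕ`, and are required to vanish outside the set
`{1, …, n+2}` of vertices of `Q`.  For each `i`, `fwd i : V i → V (i+1)` is the structure
map of the arrow `i → i+1` (it is required to vanish when the arrow is oriented in the
other direction, i.e. `ε i = false`) and `bwd i : V (i+1) → V i` is the structure map of
the arrow `i+1 → i` (required to vanish when `ε i = true`). -/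
structure ARep (k : Type) [Field k] (n : ℕ) (ε : ℕ → Bool) where
  V : ℕ → Type
  [acg : ∀ x, AddCommGroup (V x)]
  [mod : ∀ x, Module k (V x)]
  [fdim : ∀ x, FiniteDimensional k (V x)]
  triv : ∀ x, x = 0 ∨ n + 2 < x → ∀ v : V x, v = 0
  fwd : ∀ i, V i →ₗ[k] V (i + 1)
  bwd : ∀ i, V (i + 1) →ₗ[k] V i
  fwd_zero : ∀ i, ε i = false → fwd i = 0
  bwd_zero : ∀ i, ε i = true → bwd i = 0

attribute [instance] ARep.acg ARep.mod ARep.fdim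

variable {k : Type} [Field k] {n : ℕ} {ε : ℕ → Bool}

/-- Morphisms of representations. -/
@[ext]
structure ARep.Hom (M N : ARep k n ε) where
  app : ∀ x, M.V x →ₗ[k] N.V x
  comm_fwd : ∀ i (v : M.V i), app (i + 1) (M.fwd i v) = N.fwd i (app i v)
  comm_bwd : ∀ i (v : M.V (i + 1)), app i (M.bwd i v) = N.bwd i (app (i + 1) v)

/-- The identity morphism. -/
def ARep.Hom.id (M : ARep k n ε) : M.Hom M :=
  ⟨fun _ => LinearMap.id, fun _ _ => rfl, fun _ _ => rfl⟩

/-- Composition of morphisms. -/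
def ARep.Hom.comp {M N P : ARep k n ε} (g : N.Hom P) (f : M.Hom N) : M.Hom P where
  app x := (g.app x).comp (f.app x)
  comm_fwd i v := by simp only [LinearMap.comp_apply, f.comm_fwd, g.comm_fwd]
  comm_bwd i v := by simp only [LinearMap.comp_apply, f.comm_bwd, g.comm_bwd]

/-- Sum of two morphisms. -/
def ARep.Hom.add {M N : ARep k n ε} (f g : M.Hom N) : M.Hom N where
  app x := f.app x + g.app x
  comm_fwd i v := by
    simp only [LinearMap.add_apply, f.comm_fwd, g.comm_fwd, map_add]
  comm_bwd i v := by
    simp only [LinearMap.add_apply, f.comm_bwd, g.comm_bwd, map_add]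

/-- Scalar multiple of a morphism. -/
def ARep.Hom.smul {M N : ARep k n ε} (c : k) (f : M.Hom N) : M.Hom N where
  app x := c • f.app x
  comm_fwd i v := by simp only [LinearMap.smul_apply, f.comm_fwd, map_smul]
  comm_bwd i v := by simp only [LinearMap.smul_apply, f.comm_bwd, map_smul]

/-- Isomorphism of representations. -/
def ARep.Iso (M N : ARep k n ε) : Prop :=
  ∃ f : M.Hom N, ∀ x, Function.Bijective (f.app x)

/-- The zero representation(s). -/
def ARep.IsZero (M : ARep k n ε) : Prop := ∀ x, ∀ v : M.V x, v = 0

/-- The support of a representation. -/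
def ARep.supp (M : ARep k n ε) : Set ℕ := {x | ∃ v : M.V x, v ≠ 0}

/-- Direct sum of two representations. -/
def ARep.dsum (M N : ARep k n ε) : ARep k n ε where
  V x := M.V x × N.V x
  acg _ := by infer_instance
  mod _ := by infer_instance
  fdim _ := by infer_instance
  triv x hx v := by
    have h1 := M.triv x hx v.1
    have h2 := N.triv x hx v.2
    exact Prod.ext h1 h2
  fwd i := (M.fwd i).prodMap (N.fwd i)
  bwd i := (M.bwd i).prodMap (N.bwd i)
  fwd_zero i h := by
    show (M.fwd i).prodMap (N.fwd i) = 0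
    rw [M.fwd_zero i h, N.fwd_zero i h]
    apply LinearMap.ext; rintro ⟨a, b⟩; simp
  bwd_zero i h := by
    show (M.bwd i).prodMap (N.bwd i) = 0
    rw [M.bwd_zero i h, N.bwd_zero i h]
    apply LinearMap.ext; rintro ⟨a, b⟩; simp

/-- One dimensional space `k` if `P` holds, `0` otherwise (as a submodule of `k`). -/
def fiber (k : Type) [Field k] (P : Prop) : Submodule k k := if P then ⊤ else ⊥

/-- The canonical map `fiber k P → fiber k Q` : "identity" if `P ∧ Q`, zero otherwise. -/
def fiberMap (k : Type) [Field k] (P Q : Prop) : fiber k P →ₗ[k] fiber k Q :=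
  if h : P ∧ Q then
    { toFun := fun v => ⟨(v : k), by
        rw [show fiber k Q = ⊤ from if_pos h.2]; exact Submodule.mem_top⟩
      map_add' := fun _ _ => rfl
      map_smul' := fun _ _ => rfl }
  else 0

/-- The zero representation. -/
def zeroRep (k : Type) [Field k] (n : ℕ) (ε : ℕ → Bool) : ARep k n ε where
  V _ := ↥(fiber k False)
  acg _ := by infer_instance
  mod _ := by infer_instance
  fdim _ := by infer_instance
  triv x _ v := by
    have hfib : fiber k False = ⊥ := if_neg (fun h : False => h.elim)
    obtain ⟨w, hw⟩ := v
    apply Subtype.ext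
    have hb : w ∈ (⊥ : Submodule k k) := hfib ▸ hw
    exact (Submodule.mem_bot k).1 hb
  fwd _ := 0
  bwd _ := 0
  fwd_zero _ _ := rfl
  bwd_zero _ _ := rfl

/-- The condition for a vertex `x` to be in the support of the interval representation
`M(i,j)`. -/
def SuppCond (n i j x : ℕ) : Prop := i ≤ x ∧ x ≤ j ∧ 1 ≤ x ∧ x ≤ n + 2

/-- The interval (string) representation `M(i,j)` of `Q`: one dimensional at each vertex
`x` with `i ≤ x ≤ j`, zero elsewhere, with identity maps on all arrows whose endpoints
both lie in `[i,j]`. -/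
def intervalRep (k : Type) [Field k] (n : ℕ) (ε : ℕ → Bool) (i j : ℕ) : ARep k n ε where
  V x := ↥(fiber k (SuppCond n i j x))
  acg _ := by infer_instance
  mod _ := by infer_instance
  fdim _ := by infer_instance
  triv x hx v := by
    have hP : ¬SuppCond n i j x := by simp only [SuppCond]; omega
    have hfib : fiber k (SuppCond n i j x) = ⊥ := if_neg hP
    obtain ⟨w, hw⟩ := v
    apply Subtype.ext
    have hb : w ∈ (⊥ : Submodule k k) := hfib ▸ hw
    exact (Submodule.mem_bot k).1 hb
  fwd ℓ :=
    if ε ℓ = true then fiberMap k (SuppCond n i j ℓ) (SuppCond n i j (ℓ + 1)) else 0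
  bwd ℓ :=
    if ε ℓ = true then 0 else fiberMap k (SuppCond n i j (ℓ + 1)) (SuppCond n i j ℓ)
  fwd_zero ℓ h := by simp [h]
  bwd_zero ℓ h := by simp [h]

/-- Direct sum of a list of representations. -/
def dsumList (k : Type) [Field k] (n : ℕ) (ε : ℕ → Bool) :
    List (ARep k n ε) → ARep k n ε
  | [] => zeroRep k n ε
  | M :: L => M.dsum (dsumList k n ε L)

/-- Indecomposable representations. -/
def ARep.Indec (M : ARep k n ε) : Prop :=
  ¬M.IsZero ∧ ∀ A B : ARep k n ε, M.Iso (A.dsum B) → A.IsZero ∨ B.IsZero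

/-- `A` is a direct summand of `T`. -/
def ARep.IsSummand (A T : ARep k n ε) : Prop := ∃ B : ARep k n ε, T.Iso (A.dsum B)

/-- A representation is basic when it has no repeated indecomposable direct summand. -/
def ARep.Basic (T : ARep k n ε) : Prop :=
  ∀ A : ARep k n ε, A.Indec → ¬(A.dsum A).IsSummand T

/-- A short exact sequence `0 → B → E → A → 0`. -/
structure SES (B A : ARep k n ε) where
  E : ARep k n ε
  ι : B.Hom E
  π : E.Hom A
  inj : ∀ x, Function.Injective (ι.app x)
  surj : ∀ x, Function.Surjective (π.app x)
  exct : ∀ x (v : E.V x), π.app x v = 0 ↔ ∃ u, ι.app x u = v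

/-- A short exact sequence splits. -/
def SES.Splits {B A : ARep k n ε} (σ : SES B A) : Prop :=
  ∃ r : σ.E.Hom B, ∀ x (v : B.V x), r.app x (σ.ι.app x v) = v

/-- `Ext¹(A, B) = 0` : every short exact sequence `0 → B → E → A → 0` splits. -/
def ExtZero (A B : ARep k n ε) : Prop := ∀ σ : SES B A, σ.Splits

/-- `Ext¹(A,B) ≅ k`, generated by (the class of) a short exact sequence
`0 → B → E → A → 0` with indecomposable middle term `E`: there is a non-split such
sequence `σ` with `σ.E` indecomposable such that every non-split sequence is equivalent
to a nonzero scalar multiple of `σ`. -/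
def ExtOneDimIndecMid (A B : ARep k n ε) : Prop :=
  ∃ σ : SES B A, ¬σ.Splits ∧ σ.E.Indec ∧
    ∀ τ : SES B A, ¬τ.Splits → ∃ c : k, c ≠ 0 ∧
      ∃ φ : σ.E.Hom τ.E, (∀ x, Function.Bijective (φ.app x)) ∧
        (∀ x (v : B.V x), φ.app x (σ.ι.app x v) = τ.ι.app x v) ∧
        (∀ x (v : σ.E.V x), τ.π.app x (φ.app x v) = c • σ.π.app x v)

/-- Almost rigid representations. -/
def AlmostRigid (T : ARep k n ε) : Prop :=
  T.Basic ∧ ∀ A B : ARep k n ε, A.Indec → B.Indec → A.IsSummand T → B.IsSummand T →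
    ExtZero A B ∨ ExtOneDimIndecMid A B

/-- Maximal almost rigid representations. -/
def MaxAlmostRigid (T : ARep k n ε) : Prop :=
  AlmostRigid T ∧ ∀ M : ARep k n ε, ¬M.IsZero → ¬AlmostRigid (T.dsum M)

/-- `f` is a section. -/
def ARep.Hom.IsSection {M N : ARep k n ε} (f : M.Hom N) : Prop :=
  ∃ g : N.Hom M, ∀ x (v : M.V x), g.app x (f.app x v) = v

/-- `f` is a retraction. -/
def ARep.Hom.IsRetraction {M N : ARep k n ε} (f : M.Hom N) : Prop :=
  ∃ g : N.Hom M, ∀ x (v : N.V x), f.app x (g.app x v) = v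

/-- Irreducible morphisms: `f` is neither a section nor a retraction, and in every
factorization `f = g ∘ h` either `h` is a section or `g` is a retraction. -/
def ARep.Hom.Irred {M N : ARep k n ε} (f : M.Hom N) : Prop :=
  ¬f.IsSection ∧ ¬f.IsRetraction ∧
    ∀ (Z : ARep k n ε) (h : M.Hom Z) (g : Z.Hom N),
      (∀ x (v : M.V x), f.app x v = g.app x (h.app x v)) → h.IsSection ∨ g.IsRetraction

/-- Subrepresentations : families of subspaces closed under the structure maps. -/
structure Subrep (M : ARep k n ε) where
  U : ∀ x, Submodule k (M.V x)
  fwd_mem : ∀ i, ∀ v ∈ U i, M.fwd i v ∈ U (i + 1)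
  bwd_mem : ∀ i, ∀ v ∈ U (i + 1), M.bwd i v ∈ U i

/-- The central charge `Z(M) = Σ_{x=1}^{n+2} dim_k(M_x) · (p_x − p_{x−1})`. -/
def charge (p : ℕ → ℂ) (M : ARep k n ε) : ℂ :=
  ∑ x ∈ Finset.Icc 1 (n + 2), (Module.finrank k (M.V x) : ℂ) * (p x - p (x - 1))

/-- The central charge of a subrepresentation. -/
def subCharge (p : ℕ → ℂ) {M : ARep k n ε} (L : Subrep M) : ℂ :=
  ∑ x ∈ Finset.Icc 1 (n + 2), (Module.finrank k (L.U x) : ℂ) * (p x - p (x - 1))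

/-- The representation `F(T) = ⊕_{γ(a,b) ∈ T} M(a+1, b)` attached to a collection `T` of
segments of the polygon `P(Q)`. -/
def FRep (k : Type) [Field k] (n : ℕ) (ε : ℕ → Bool) (T : Finset (ℕ × ℕ)) : ARep k n ε :=
  dsumList k n ε (T.toList.map fun e => intervalRep k n ε (e.1 + 1) e.2)

end CambrianA

namespace CambrianA

/-! The support `[x + 1, y]` of a hook or cohook of the arrow `a` between the vertices `a` and
`a + 1` spans a run of arrows oriented against `a`, delimited by arrows oriented like `a` or by the
ends of `Q`, and `a` itself delimits it. So `x < y` are consecutive vertices on the side of `P(Q)`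
containing `a`, and `a` is one of them. Conversely, a boundary edge other than `γ(0, n + 2)` has an
end in `{1, …, n + 1}`, that is, at an arrow lying on its side; and `γ(0, n + 2)` is a boundary edge
exactly when one side contains no arrow. Geometry only enters through the fact that a segment
determines its endpoints, so it is enough that the points are distinct. -/

section Segment

variable {𝕜 E : Type*} [Field 𝕜] [LinearOrder 𝕜] [IsStrictOrderedRing 𝕜] [AddCommGroup E]
  [Module 𝕜 E]

theorem left_mem_extremePoints_segment (x y : E) : x ∈ (segment 𝕜 x y).extremePoints 𝕜 := by
  rw [mem_extremePoints_iff_left]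
  refine ⟨left_mem_segment 𝕜 x y, ?_⟩
  simp only [segment_eq_image' 𝕜 x y]
  rintro _ ⟨s, hs, rfl⟩ _ ⟨t, ht, rfl⟩ ⟨a, b, ha, hb, hab, hx⟩
  have hsmul : (a * s + b * t) • (y - x) = 0 := by
    linear_combination (norm := module) hx - hab • x
  rcases smul_eq_zero.1 hsmul with hzero | hyx
  · have hs_zero : a * s = 0 := by
      linarith [mul_nonneg ha.le hs.1, mul_nonneg hb.le ht.1]
    simp only [(mul_eq_zero.1 hs_zero).resolve_left ha.ne', zero_smul, add_zero]
  · simp only [hyx, smul_zero, add_zero]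

theorem extremePoints_segment (x y : E) : (segment 𝕜 x y).extremePoints 𝕜 = {x, y} := by
  refine Set.Subset.antisymm ?_ (Set.pair_subset (left_mem_extremePoints_segment x y) ?_)
  · rw [← convexHull_pair]
    exact extremePoints_convexHull_subset
  · rw [segment_symm]
    exact left_mem_extremePoints_segment y x

theorem segment_eq_segment_iff {x y x' y' : E} :
    segment 𝕜 x y = segment 𝕜 x' y' ↔ x = x' ∧ y = y' ∨ x = y' ∧ y = x' := by
  rw [← Set.pair_eq_pair_iff]
  refine ⟨fun h => ?_, fun h => ?_⟩
  · rw [← extremePoints_segment (𝕜 := 𝕜) x y, h, extremePoints_segment]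
  · rw [← convexHull_pair, h, convexHull_pair]

end Segment

section Chord

variable {E : Type*} [AddCommGroup E] [Module ℝ E] {n : ℕ} {ε : ℕ → Bool}

/-- The segment `γ(e.1, e.2)` between points of a family in a real vector space; `Seg` is the case
of the plane. -/
def chord (p : ℕ → E) (e : ℕ × ℕ) : Set E := segment ℝ (p e.1) (p e.2)

theorem injOn_chord {p : ℕ → E} (hp : Set.InjOn p (Set.Iic (n + 2))) :
    Set.InjOn (chord p) {e | ValidPair n e} := by
  rintro ⟨a, b⟩ ⟨hab, hb⟩ ⟨a', b'⟩ ⟨hab', hb'⟩ h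
  dsimp only at hab hb hab' hb'
  have hinj : ∀ {i j}, i ≤ n + 2 → j ≤ n + 2 → p i = p j → i = j := fun hi hj => hp hi hj
  rcases segment_eq_segment_iff.1 h with ⟨hpa, hpb⟩ | ⟨hpa, hpb⟩
  · exact Prod.ext (hinj (by omega) (by omega) hpa) (hinj (by omega) (by omega) hpb)
  · have hab'_eq : a = b' := hinj (by omega) (by omega) hpa
    have hba'_eq : b = a' := hinj (by omega) (by omega) hpb
    omega

theorem PolyPts.injOn {p : ℕ → ℂ} (hp : PolyPts n ε p) : Set.InjOn p (Set.Iic (n + 2)) :=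
  have hre : StrictMonoOn (Complex.re ∘ p) (Set.Iic (n + 2)) := fun a _ b hb hab => hp.1 a b hab hb
  hre.injOn.of_comp

end Chord

section Combinatorics

variable {n : ℕ} {ε : ℕ → Bool} {c : Bool} {a x y lo hi : ℕ}

/-- Vertices of `P(Q)` on one of its two sides, which are treated uniformly: `c = false` is
`LowerVertex` and `c = true` is `UpperVertex`. -/
def SideVertex (n : ℕ) (ε : ℕ → Bool) (c : Bool) (x : ℕ) : Prop :=
  x = 0 ∨ x = n + 2 ∨ (1 ≤ x ∧ x ≤ n + 1 ∧ ε x = c)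

/-- Boundary edges of `P(Q)` on one of its two sides: `c = false` is `LowerEdge` and `c = true` is
`UpperEdge`. -/
def SideEdge (n : ℕ) (ε : ℕ → Bool) (c : Bool) (x y : ℕ) : Prop :=
  SideVertex n ε c x ∧ SideVertex n ε c y ∧ x < y ∧
    ∀ z, SideVertex n ε c z → ¬(x < z ∧ z < y)

theorem boundaryEdge_iff_exists_sideEdge : BoundaryEdge n ε x y ↔ ∃ c, SideEdge n ε c x y :=
  (Bool.exists_bool (p := fun c => SideEdge n ε c x y)).symm

theorem SideVertex.le (h : SideVertex n ε c x) : x ≤ n + 2 := by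
  unfold SideVertex at h
  omega

theorem SideVertex.eq_color (h : SideVertex n ε c x) (h0 : x ≠ 0) (hn : x ≠ n + 2) :
    1 ≤ x ∧ x ≤ n + 1 ∧ ε x = c :=
  (h.resolve_left h0).resolve_left hn

theorem BoundaryEdge.validPair (h : BoundaryEdge n ε x y) : ValidPair n (x, y) :=
  have ⟨_, _, hy, hxy, _⟩ := boundaryEdge_iff_exists_sideEdge.1 h
  ⟨hxy, hy.le⟩

theorem sideEdge_iff_forall_eq_not :
    SideEdge n ε c x y ↔ SideVertex n ε c x ∧ SideVertex n ε c y ∧ x < y ∧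
      ∀ ℓ, x + 1 ≤ ℓ → ℓ < y → ε ℓ = !c := by
  refine and_congr_right fun _ => and_congr_right fun hy => and_congr_right fun _ => ?_
  have := hy.le
  refine forall_congr' fun ℓ => ⟨fun h hx hℓ => ?_, fun h hv hlt => ?_⟩
  · rw [Bool.eq_not]
    exact fun hc => h (Or.inr (Or.inr ⟨by omega, by omega, hc⟩)) ⟨hx, hℓ⟩
  · have := (hv.eq_color (by omega) (by omega)).2.2
    exact Bool.eq_not.1 (h hlt.1 hlt.2) this

theorem sideEdge_left_iff (h1 : 1 ≤ a) (hn : a ≤ n + 1) :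
    SideEdge n ε (ε a) a y ↔ a + 1 ≤ y ∧ y ≤ n + 2 ∧
      (∀ ℓ, a + 1 ≤ ℓ → ℓ < y → ε ℓ = !ε a) ∧ (y = n + 2 ∨ ε y = ε a) := by
  rw [sideEdge_iff_forall_eq_not]
  grind [SideVertex]

theorem sideEdge_right_iff (h1 : 1 ≤ a) (hn : a ≤ n + 1) :
    SideEdge n ε (ε a) x a ↔ x + 1 ≤ a ∧
      (∀ ℓ, x + 1 ≤ ℓ → ℓ < a → ε ℓ = !ε a) ∧ (x = 0 ∨ ε x = ε a) := by
  rw [sideEdge_iff_forall_eq_not]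
  grind [SideVertex]

theorem isHook_or_isCohook_iff_sideEdge (h1 : 1 ≤ a) (hn : a ≤ n + 1) :
    IsHook n ε a (x + 1) y ∨ IsCohook n ε a (x + 1) y ↔
      SideEdge n ε (ε a) x y ∧ (a = x ∨ a = y) := by
  have hsplit : SideEdge n ε (ε a) x y ∧ (a = x ∨ a = y) ↔
      (x = a ∧ SideEdge n ε (ε a) a y) ∨ (y = a ∧ SideEdge n ε (ε a) x a) := by
    grind
  rw [hsplit, sideEdge_left_iff h1 hn, sideEdge_right_iff h1 hn]
  cases ha : ε a <;> simp [IsHook, IsCohook, ha, or_comm]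

theorem one_le_of_isHook_or_isCohook (h : IsHook n ε a lo hi ∨ IsCohook n ε a lo hi) :
    1 ≤ lo := by
  grind [IsHook, IsCohook]

theorem exists_isHook_or_isCohook_iff :
    (∃ a, 1 ≤ a ∧ a ≤ n + 1 ∧ (IsHook n ε a (x + 1) y ∨ IsCohook n ε a (x + 1) y)) ↔
      BoundaryEdge n ε x y ∧ (x, y) ≠ (0, n + 2) := by
  rw [boundaryEdge_iff_exists_sideEdge, ne_eq, Prod.mk.injEq]
  constructor
  · rintro ⟨a, h1, hn, h⟩
    obtain ⟨hedge, ha⟩ := (isHook_or_isCohook_iff_sideEdge h1 hn).1 h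
    exact ⟨⟨_, hedge⟩, by omega⟩
  · rintro ⟨⟨c, hedge⟩, hne⟩
    have ⟨hx, hy, hxy, _⟩ := hedge
    have hyn := hy.le
    obtain ⟨a, ⟨h1, hn, rfl⟩, ha⟩ :
        ∃ a, (1 ≤ a ∧ a ≤ n + 1 ∧ ε a = c) ∧ (a = x ∨ a = y) := by
      by_cases hx0 : x = 0
      · exact ⟨y, hy.eq_color (by omega) (by omega), Or.inr rfl⟩
      · exact ⟨x, hx.eq_color hx0 (by omega), Or.inl rfl⟩
    exact ⟨a, h1, hn, (isHook_or_isCohook_iff_sideEdge h1 hn).2 ⟨hedge, ha⟩⟩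

/-- All arrows of `Q` point in the same direction. -/
def LinearlyOriented (n : ℕ) (ε : ℕ → Bool) : Prop :=
  (∀ i, 1 ≤ i → i ≤ n + 1 → ε i = true) ∨ (∀ i, 1 ≤ i → i ≤ n + 1 → ε i = false)

theorem boundaryEdge_zero_iff_linearlyOriented :
    BoundaryEdge n ε 0 (n + 2) ↔ LinearlyOriented n ε := by
  simp [boundaryEdge_iff_exists_sideEdge, sideEdge_iff_forall_eq_not, SideVertex,
    LinearlyOriented, Nat.one_le_iff_ne_zero, Nat.lt_succ_iff]

end Combinatorics

section Representations

variable {k : Type} [Field k] {n : ℕ} {ε : ℕ → Bool} {lo hi : ℕ}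

theorem nontrivial_fiber_iff {P : Prop} : Nontrivial (fiber k P) ↔ P := by
  rw [Submodule.nontrivial_iff_ne_bot, fiber]
  split_ifs with h
  exacts [iff_of_true top_ne_bot h, iff_of_false (not_not_intro rfl) h]

theorem supp_intervalRep (hlo : 1 ≤ lo) (hhi : hi ≤ n + 2) :
    (intervalRep k n ε lo hi).supp = Set.Icc lo hi := by
  ext x
  calc x ∈ (intervalRep k n ε lo hi).supp
    _ ↔ SuppCond n lo hi x := (nontrivial_iff_exists_ne 0).symm.trans nontrivial_fiber_iff
    _ ↔ x ∈ Set.Icc lo hi := by rw [SuppCond, Set.mem_Icc]; omega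

/-- The representations `H(α)` and `C(α)`, for `α` an arrow of `Q`. -/
def hookCohookReps (k : Type) [Field k] (n : ℕ) (ε : ℕ → Bool) : Set (ARep k n ε) :=
  {M | ∃ a, 1 ≤ a ∧ a ≤ n + 1 ∧ ∃ lo hi,
    (IsHook n ε a lo hi ∨ IsCohook n ε a lo hi) ∧ M = intervalRep k n ε lo hi}

/-- The pairs `(a, b)` indexing the boundary edges `γ(a, b)` of `P(Q)`. -/
def boundaryEdges (n : ℕ) (ε : ℕ → Bool) : Set (ℕ × ℕ) := {e | BoundaryEdge n ε e.1 e.2}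

theorem boundaryEdges_subset_validPair : boundaryEdges n ε ⊆ {e | ValidPair n e} :=
  fun _ => BoundaryEdge.validPair

theorem hookCohookReps_eq_image : hookCohookReps k n ε =
    (fun e : ℕ × ℕ => intervalRep k n ε (e.1 + 1) e.2) ''
      (boundaryEdges n ε \ {(0, n + 2)}) := by
  ext M
  constructor
  · rintro ⟨a, h1, hn, lo, hi, h, rfl⟩
    obtain ⟨x, rfl⟩ := Nat.exists_eq_add_of_le' (one_le_of_isHook_or_isCohook h)
    exact ⟨(x, hi), exists_isHook_or_isCohook_iff.1 ⟨a, h1, hn, h⟩, rfl⟩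
  · rintro ⟨⟨x, y⟩, he, rfl⟩
    obtain ⟨a, h1, hn, h⟩ := exists_isHook_or_isCohook_iff.2 he
    exact ⟨a, h1, hn, x + 1, y, h, rfl⟩

variable {E : Type*} [AddCommGroup E] [Module ℝ E] {p : ℕ → E}

/-- The map `M(a, b) ↦ γ(a - 1, b)`, extended to all representations by reading `a` and `b` off the
support. -/
def repChord (p : ℕ → E) (M : ARep k n ε) : Set E :=
  chord p (sInf M.supp - 1, sSup M.supp)

theorem repChord_intervalRep {e : ℕ × ℕ} (he : ValidPair n e) :
    repChord p (intervalRep k n ε (e.1 + 1) e.2) = chord p e := by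
  have hle : e.1 + 1 ≤ e.2 := he.1
  rw [repChord, supp_intervalRep (Nat.le_add_left 1 e.1) he.2, csInf_Icc hle, csSup_Icc hle,
    Nat.add_sub_cancel]

theorem bijOn_repChord (hp : Set.InjOn p (Set.Iic (n + 2))) :
    Set.BijOn (repChord p) (hookCohookReps k n ε)
      (chord p '' (boundaryEdges n ε \ {(0, n + 2)})) := by
  have hvalid : boundaryEdges n ε \ {(0, n + 2)} ⊆ {e | ValidPair n e} :=
    Set.sdiff_subset.trans boundaryEdges_subset_validPair
  have hcomp : Set.EqOn (chord p)
      (repChord p ∘ fun e : ℕ × ℕ => intervalRep k n ε (e.1 + 1) e.2)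
      (boundaryEdges n ε \ {(0, n + 2)}) := fun e he => (repChord_intervalRep (hvalid he)).symm
  have hbij := ((injOn_chord hp).mono hvalid).bijOn_image.congr hcomp
  rw [hookCohookReps_eq_image]
  exact (Set.bijOn_comp_iff hbij.injOn.of_comp).1 hbij

/-- The boundary edges of `P(Q)`, as segments. -/
def boundarySegments (n : ℕ) (ε : ℕ → Bool) (p : ℕ → E) : Set (Set E) :=
  {s | ∃ a b : ℕ, BoundaryEdge n ε a b ∧ s = segment ℝ (p a) (p b)}

theorem boundarySegments_eq_image : boundarySegments n ε p = chord p '' boundaryEdges n ε := by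
  ext s
  simp [boundarySegments, boundaryEdges, chord, eq_comm]

theorem chord_image_boundaryEdges_sdiff (hp : Set.InjOn p (Set.Iic (n + 2))) :
    chord p '' (boundaryEdges n ε \ {(0, n + 2)}) =
      boundarySegments n ε p \ {chord p (0, n + 2)} := by
  have hvalid : insert (0, n + 2) (boundaryEdges n ε) ⊆ {e | ValidPair n e} :=
    Set.insert_subset ⟨Nat.succ_pos _, le_rfl⟩ boundaryEdges_subset_validPair
  have himage := ((injOn_chord hp).mono hvalid).image_sdiff_subset
    (Set.singleton_subset_iff.2 (Set.mem_insert (0, n + 2) _))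
  simpa only [Set.insert_sdiff_self_of_mem, Set.image_insert_eq, Set.image_singleton,
    Set.insert_sdiff_of_mem _ (Set.mem_singleton _), ← boundarySegments_eq_image] using himage

end Representations

theorem stmt_5_general (k : Type) [Field k] {E : Type*} [AddCommGroup E] [Module ℝ E] (n : ℕ)
    (ε : ℕ → Bool) (p : ℕ → E) (hp : Set.InjOn p (Set.Iic (n + 2))) :
    (LinearlyOriented n ε → Set.BijOn (repChord p) (hookCohookReps k n ε)
      (boundarySegments n ε p \ {chord p (0, n + 2)})) ∧
    (¬LinearlyOriented n ε → Set.BijOn (repChord p) (hookCohookReps k n ε)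
      (boundarySegments n ε p)) := by
  have hbij := bijOn_repChord (k := k) (ε := ε) hp
  refine ⟨fun _ => chord_image_boundaryEdges_sdiff hp ▸ hbij, fun hQ => ?_⟩
  have hnotMem : (0, n + 2) ∉ boundaryEdges n ε := mt boundaryEdge_zero_iff_linearlyOriented.1 hQ
  rwa [Set.sdiff_singleton_eq_self hnotMem, ← boundarySegments_eq_image] at hbij

/-- the map `M(a,b) ↦ γ(a−1, b)` restricts to a bijection from
`{H(α), C(α) : α ∈ Q₁}` onto the set of boundary edges of `P(Q)` minus `γ(0, n+2)` if
`Q` is linearly oriented, and onto the set of all boundary edges otherwise.  (An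
interval representation `M(a,b)` is sent to the segment joining the vertices
`sInf(supp) − 1` and `sSup(supp)` of its support.) -/
theorem stmt_5 (k : Type) [Field k] (n : ℕ) (ε : ℕ → Bool) (p : ℕ → ℂ)
    (hp : PolyPts n ε p) :
    (((∀ i, 1 ≤ i → i ≤ n + 1 → ε i = true) ∨ (∀ i, 1 ≤ i → i ≤ n + 1 → ε i = false)) →
      Set.BijOn (fun M : ARep k n ε => segment ℝ (p (sInf M.supp - 1)) (p (sSup M.supp)))
        {M : ARep k n ε | ∃ a, 1 ≤ a ∧ a ≤ n + 1 ∧ ∃ lo hi,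
          (IsHook n ε a lo hi ∨ IsCohook n ε a lo hi) ∧ M = intervalRep k n ε lo hi}
        ({s : Set ℂ | ∃ a b : ℕ, BoundaryEdge n ε a b ∧ s = segment ℝ (p a) (p b)} \
          {segment ℝ (p 0) (p (n + 2))})) ∧
    (¬((∀ i, 1 ≤ i → i ≤ n + 1 → ε i = true) ∨ (∀ i, 1 ≤ i → i ≤ n + 1 → ε i = false)) →
      Set.BijOn (fun M : ARep k n ε => segment ℝ (p (sInf M.supp - 1)) (p (sSup M.supp)))
        {M : ARep k n ε | ∃ a, 1 ≤ a ∧ a ≤ n + 1 ∧ ∃ lo hi,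
          (IsHook n ε a lo hi ∨ IsCohook n ε a lo hi) ∧ M = intervalRep k n ε lo hi}
        {s : Set ℂ | ∃ a b : ℕ, BoundaryEdge n ε a b ∧ s = segment ℝ (p a) (p b)}) :=
  stmt_5_general k n ε p hp.injOn

end CambrianA
end
end

section
/- Let M = M(i,j) and let N be an indecomposable representation of Q whose support strictly contains [i,j]. (1) If there is an irreducible morphism M → N, then N is obtained from M by adding a hook, in one of at most two ways: (a) there is an arrow α: (j+1) → j with H(α) = M(j+1, ℓ) and N = M(i, ℓ); or (b) there is an arrow α: (i−1) → i with H(α) = M(h, i−1) and N = M(h, j). (2) If there is an irreducible morphism N → M, then M is obtained from N by removing a cohook, in one of at most two ways: (a) there is an arrow α: j → (j+1) with C(α) = M(j+1, ℓ) and N = M(i, ℓ); or (b) there is an arrow α: i → (i−1) with C(α) = M(h, i−1) and N = M(h, j). Moreover, every irreducible morphism between indecomposable representations of Q is of one of these forms. -/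
open scoped Classical

noncomputable section

namespace CambrianA

/-!
An indecomposable representation `M` is an interval representation (Gabriel): follow a vector at the
leftmost vertex of the support along the arrows, and a functional along the arrows of the dual
representation. A vertex where both can be stopped, while they still pair to a nonzero scalar,
yields morphisms `M(a,b) → M → M(a,b)` whose composition is invertible.

A morphism `M(a,b) → M(c,d)` is a scalar multiple of the map that preserves basis vectors on the
intersection of the supports, and it can be nonzero only if `a` precedes `c` and `b` precedes `d` in
two linear orders on the vertices. Conversely, it factors through `M(p,q)` whenever `p` lies between
`a` and `c`, and `q` lies between `b` and `d`. An irreducible morphism therefore moves a single end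
of the interval, to a neighbor in the corresponding order. If this enlarges the interval, it adds a
hook; if it shrinks the interval, it removes a cohook. Reversing all arrows exchanges the two cases.
-/

section LinearAlgebra

theorem dualAnnihilator_map {R V W : Type*} [CommSemiring R] [AddCommMonoid V] [Module R V]
    [AddCommMonoid W] [Module R W] (f : V →ₗ[R] W) (E : Submodule R V) :
    (E.map f).dualAnnihilator = E.dualAnnihilator.comap f.dualMap := by
  ext φ
  simp [Submodule.mem_dualAnnihilator]

theorem dualAnnihilator_comap {K V W : Type*} [Field K] [AddCommGroup V] [Module K V]
    [AddCommGroup W] [Module K W] (f : V →ₗ[K] W) (E : Submodule K W) :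
    (E.comap f).dualAnnihilator = E.dualAnnihilator.map f.dualMap := by
  conv_lhs => rw [← E.ker_mkQ]
  rw [← LinearMap.ker_comp, ← LinearMap.range_dualMap_eq_dualAnnihilator_ker,
    ← LinearMap.dualMap_comp_dualMap, LinearMap.range_comp, E.range_dualMap_mkQ_eq]

end LinearAlgebra

section Representations

variable {k : Type} [Field k] {n : ℕ} {ε : ℕ → Bool}

/-- The intervals in the vertex set of `Q`. They index the representations `M(a,b)`. -/
structure IsInterval (n a b : ℕ) : Prop where
  one_le : 1 ≤ a
  le : a ≤ b
  le_last : b ≤ n + 2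

namespace ARep

section Threads

/-- The dual representation `Hom_k(M, k)`, a representation of the opposite quiver. -/
def dual (M : ARep k n ε) : ARep k n (fun x => !ε x) where
  V x := Module.Dual k (M.V x)
  triv x hx φ := LinearMap.ext fun v => by rw [M.triv x hx v, map_zero, map_zero]
  fwd x := (M.bwd x).dualMap
  bwd x := (M.fwd x).dualMap
  fwd_zero x h := by
    rw [M.bwd_zero x (by simpa using h)]
    exact LinearMap.ext fun φ => LinearMap.ext fun _ => map_zero φ
  bwd_zero x h := by
    rw [M.fwd_zero x (by simpa using h)]
    exact LinearMap.ext fun φ => LinearMap.ext fun _ => map_zero φ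

/-- The relation between `M.V x` and `M.V (x + 1)` given by the graph of the structure map of the
arrow between `x` and `x + 1`, whichever way it points. -/
def Joined (M : ARep k n ε) (x : ℕ) (v : M.V x) (w : M.V (x + 1)) : Prop :=
  (ε x = true → M.fwd x v = w) ∧ (ε x = false → M.bwd x w = v)

/-- A thread on `[a, b]`: a choice of vectors that is compatible with all the arrows between
vertices of `[a, b]`. The values outside `[a, b]` are irrelevant. -/
def IsThread (M : ARep k n ε) (a b : ℕ) (v : ∀ x, M.V x) : Prop :=
  ∀ x, a ≤ x → x < b → M.Joined x (v x) (v (x + 1))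

/-- A thread on `[a, b]` is closed when the arrows leaving `[a, b]` kill it. Closed threads are the
images of the basis vectors of `M(a,b)` under morphisms `M(a,b) → M`. -/
structure IsClosedThread (M : ARep k n ε) (a b : ℕ) (v : ∀ x, M.V x) : Prop where
  isThread : M.IsThread a b v
  left : ∀ x, x + 1 = a → ε x = false → M.bwd x (v (x + 1)) = 0
  right : ε b = true → M.fwd b (v b) = 0

variable {M : ARep k n ε} {a b : ℕ}

theorem Joined.pairing_eq {x : ℕ} {v : M.V x} {w : M.V (x + 1)} {φ : Module.Dual k (M.V x)}
    {ψ : Module.Dual k (M.V (x + 1))} (hvw : M.Joined x v w) (hφψ : M.dual.Joined x φ ψ) :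
    ψ w = φ v := by
  cases h : ε x with
  | true => rw [← hvw.1 h, ← hφψ.2 (by simp [h])]; rfl
  | false => rw [← hvw.2 h, ← hφψ.1 (by simp [h])]; rfl

theorem IsThread.pairing_eq {v : ∀ x, M.V x} {p : ∀ x, Module.Dual k (M.V x)}
    (hv : M.IsThread a b v) (hp : M.dual.IsThread a b p) {x : ℕ} (hax : a ≤ x) (hxb : x ≤ b) :
    p x (v x) = p a (v a) := by
  induction x, hax using Nat.le_induction with
  | base => rfl
  | succ x hax ih => rw [(hv x hax hxb).pairing_eq (hp x hax hxb), ih (by omega)]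

theorem IsThread.update {v : ∀ x, M.V x} {w : M.V (b + 1)} (hv : M.IsThread a b v)
    (hw : M.Joined b (v b) w) : M.IsThread a (b + 1) (Function.update v (b + 1) w) := by
  intro x hax hxb
  rw [Function.update_of_ne (by omega)]
  obtain rfl | hx := eq_or_ne x b
  · rwa [Function.update_self]
  · rw [Function.update_of_ne (by omega)]
    exact hv x hax (by omega)

/-- The vectors at `b` joined to a vector of a given subspace at `b + 1`. -/
def joinedTo (M : ARep k n ε) (b : ℕ) (E : Submodule k (M.V (b + 1))) : Submodule k (M.V b) :=
  if ε b = true then E.comap (M.fwd b) else E.map (M.bwd b)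

theorem mem_joinedTo {E : Submodule k (M.V (b + 1))} {v : M.V b} :
    v ∈ M.joinedTo b E ↔ ∃ w ∈ E, M.Joined b v w := by
  cases h : ε b <;> simp [joinedTo, Joined, h]

theorem dualAnnihilator_joinedTo (E : Submodule k (M.V (b + 1))) :
    (M.joinedTo b E).dualAnnihilator = M.dual.joinedTo b E.dualAnnihilator := by
  cases h : ε b with
  | true =>
    rw [joinedTo, if_pos h]
    exact (dualAnnihilator_comap (M.fwd b) E).trans (if_neg (by simp [h])).symm
  | false =>
    rw [joinedTo, if_neg (by simp [h])]
    exact (dualAnnihilator_map (M.bwd b) E).trans (if_pos (by simp [h])).symm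

/-- The vectors at `a` from which a thread on `[a, b]` leads into a given subspace at `b`. -/
def threadStart (M : ARep k n ε) (a b : ℕ) (E : Submodule k (M.V b)) : Submodule k (M.V a) where
  carrier := {u | ∃ v : ∀ x, M.V x, M.IsThread a b v ∧ v a = u ∧ v b ∈ E}
  zero_mem' := ⟨0, fun x _ _ => by simp [Joined], rfl, E.zero_mem⟩
  add_mem' := by
    rintro _ _ ⟨v, hv, rfl, hvE⟩ ⟨w, hw, rfl, hwE⟩
    refine ⟨v + w, fun x hax hxb => ?_, rfl, E.add_mem hvE hwE⟩
    simp +contextual [Joined, (hv x hax hxb).1, (hv x hax hxb).2, (hw x hax hxb).1,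
      (hw x hax hxb).2]
  smul_mem' := by
    rintro t _ ⟨v, hv, rfl, hvE⟩
    refine ⟨t • v, fun x hax hxb => ?_, rfl, E.smul_mem t hvE⟩
    simp +contextual [Joined, (hv x hax hxb).1, (hv x hax hxb).2]

theorem threadStart_self (E : Submodule k (M.V a)) : M.threadStart a a E = E := by
  ext u
  constructor
  · rintro ⟨v, -, rfl, hv⟩
    exact hv
  · exact fun hu => ⟨Pi.single a u, fun x hax hxa => by omega, by simp, by simpa using hu⟩

theorem threadStart_succ (hab : a ≤ b) (E : Submodule k (M.V (b + 1))) :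
    M.threadStart a (b + 1) E = M.threadStart a b (M.joinedTo b E) := by
  ext u
  constructor
  · rintro ⟨v, hv, hva, hvE⟩
    exact ⟨v, fun x hax hxb => hv x hax (by omega), hva,
      mem_joinedTo.2 ⟨_, hvE, hv b hab (by omega)⟩⟩
  · rintro ⟨v, hv, hva, hvE⟩
    obtain ⟨w, hwE, hw⟩ := mem_joinedTo.1 hvE
    refine ⟨_, hv.update hw, ?_, ?_⟩
    · rwa [Function.update_of_ne (by omega)]
    · rwa [Function.update_self]

theorem dualAnnihilator_threadStart (hab : a ≤ b) (E : Submodule k (M.V b)) :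
    (M.threadStart a b E).dualAnnihilator = M.dual.threadStart a b E.dualAnnihilator := by
  induction b, hab using Nat.le_induction with
  | base => rw [threadStart_self]; exact (threadStart_self (M := M.dual) _).symm
  | succ b hab ih =>
    rw [threadStart_succ hab, ih, dualAnnihilator_joinedTo]
    exact (threadStart_succ (M := M.dual) hab _).symm

/-- The possible last vectors of a thread on `[a, b]` that is closed at `b`. -/
def closing (M : ARep k n ε) (b : ℕ) : Submodule k (M.V b) :=
  if ε b = true then M.joinedTo b ⊥ else ⊤

theorem mem_closing {v : M.V b} : v ∈ M.closing b ↔ (ε b = true → M.fwd b v = 0) := by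
  cases h : ε b <;> simp [closing, joinedTo, h]

theorem dual_threadStart_closing (hab : a ≤ b) :
    M.dual.threadStart a b (M.dual.closing b) =
      (M.threadStart a b (if ε b = true then ⊥ else M.joinedTo b ⊤)).dualAnnihilator := by
  rw [dualAnnihilator_threadStart hab]
  congr 1
  cases h : ε b with
  | true =>
    rw [closing, if_neg (by simp [h]), if_pos rfl]
    exact Submodule.dualAnnihilator_bot.symm
  | false =>
    rw [closing, if_pos (by simp [h]), if_neg (by simp), dualAnnihilator_joinedTo]
    congr 1
    exact Submodule.dualAnnihilator_top.symm

-- The pair of subspaces `0 ⊆ V` at `b` pulls back along threads to a pair of subspaces at `a`: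
-- the pair `0 ⊆ M.V a` for `b = a`, and two equal subspaces for `b = n + 3`. At the first `b`
-- where the pair shrinks, one of its two members changes, which provides `u` and `φ`.
theorem exists_pairing_ne_zero (ha : a ≤ n + 2) (hne : ∃ u : M.V a, u ≠ 0) :
    ∃ b, a ≤ b ∧ b ≤ n + 2 ∧ ∃ u ∈ M.threadStart a b (M.closing b),
      ∃ φ : Module.Dual k (M.V a), φ ∈ M.dual.threadStart a b (M.dual.closing b) ∧ φ u ≠ 0 := by
  by_contra! hpair
  have hle (b : ℕ) (hab : a ≤ b) (hb : b ≤ n + 2) : M.threadStart a b (M.closing b) ≤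
      M.threadStart a b (if ε b = true then ⊥ else M.joinedTo b ⊤) := fun u hu => by
    rw [← Subspace.forall_mem_dualAnnihilator_apply_eq_zero_iff, ← dual_threadStart_closing hab]
    exact hpair b hab hb u hu
  have hconst (b : ℕ) (hab : a ≤ b) (hb : b ≤ n + 3) :
      M.threadStart a b ⊥ = ⊥ ∧ M.threadStart a b ⊤ = ⊤ := by
    induction b, hab using Nat.le_induction with
    | base => exact ⟨threadStart_self _, threadStart_self _⟩
    | succ b hab ih =>
      obtain ⟨hbot, htop⟩ := ih (by omega)
      specialize hle b hab (by omega)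
      rw [threadStart_succ hab, threadStart_succ hab]
      cases h : ε b with
      | true =>
        rw [closing, if_pos h, if_pos h, hbot, le_bot_iff] at hle
        exact ⟨hle, by simpa [joinedTo, h] using htop⟩
      | false =>
        rw [closing, if_neg (by simp [h]), if_neg (by simp [h]), htop, top_le_iff] at hle
        exact ⟨by simpa [joinedTo, h] using hbot, hle⟩
  have htriv : (⊥ : Submodule k (M.V (n + 3))) = ⊤ :=
    (Submodule.eq_bot_iff _).2 (fun x _ => M.triv _ (by omega) x) |>.symm
  obtain ⟨hbot, htop⟩ := hconst (n + 3) (by omega) le_rfl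
  obtain ⟨u, hu⟩ := hne
  exact hu ((Submodule.mem_bot k).1 (hbot ▸ htriv ▸ htop ▸ Submodule.mem_top))

end Threads

section Homs

variable {M N X Y : ARep k n ε}

/-- A morphism, given by linear maps that are compatible with the arrows of `Q` only. The zero
structure maps against the orientation need not be checked. -/
def Hom.ofArrows (app : ∀ x, M.V x →ₗ[k] N.V x)
    (hfwd : ∀ x, ε x = true → ∀ v, app (x + 1) (M.fwd x v) = N.fwd x (app x v))
    (hbwd : ∀ x, ε x = false → ∀ v, app x (M.bwd x v) = N.bwd x (app (x + 1) v)) :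
    M.Hom N where
  app := app
  comm_fwd x v := by
    cases h : ε x with
    | true => exact hfwd x h v
    | false => simp [M.fwd_zero x h, N.fwd_zero x h]
  comm_bwd x v := by
    cases h : ε x with
    | true => simp [M.bwd_zero x h, N.bwd_zero x h]
    | false => exact hbwd x h v

/-- The zero morphism. -/
def Hom.zero (M N : ARep k n ε) : M.Hom N where
  app _ := 0
  comm_fwd _ _ := by simp
  comm_bwd _ _ := by simp

theorem Iso.refl (M : ARep k n ε) : M.Iso M :=
  ⟨Hom.id M, fun _ => Function.bijective_id⟩

theorem Iso.exists_inverse (h : M.Iso N) : ∃ (f : M.Hom N) (g : N.Hom M),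
    (∀ x v, g.app x (f.app x v) = v) ∧ ∀ x v, f.app x (g.app x v) = v := by
  obtain ⟨f, hf⟩ := h
  let e (x : ℕ) : M.V x ≃ₗ[k] N.V x := LinearEquiv.ofBijective (f.app x) (hf x)
  refine ⟨f, ⟨fun x => (e x).symm, fun x v => ?_, fun x v => ?_⟩,
    fun x => (e x).symm_apply_apply, fun x => (e x).apply_symm_apply⟩
  · exact (e (x + 1)).symm_apply_eq.2 (by
      simpa [e] using congrArg (N.fwd x) ((e x).apply_symm_apply v).symm |>.trans
        (f.comm_fwd x _).symm)
  · exact (e x).symm_apply_eq.2 (by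
      simpa [e] using congrArg (N.bwd x) ((e (x + 1)).apply_symm_apply v).symm |>.trans
        (f.comm_bwd x _).symm)

theorem Iso.supp_eq (h : M.Iso N) : M.supp = N.supp := by
  obtain ⟨f, g, hgf, hfg⟩ := h.exists_inverse
  ext x
  constructor
  · rintro ⟨v, hv⟩
    exact ⟨f.app x v, fun h0 => hv (by rw [← hgf x v, h0, map_zero])⟩
  · rintro ⟨w, hw⟩
    exact ⟨g.app x w, fun h0 => hw (by rw [← hfg x w, h0, map_zero])⟩

/-- The kernel of a morphism. -/
def Hom.ker (f : M.Hom N) : ARep k n ε where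
  V x := LinearMap.ker (f.app x)
  triv x hx v := Subtype.ext (M.triv x hx v)
  fwd x := (M.fwd x).restrict fun v hv => by
    rw [LinearMap.mem_ker] at hv ⊢
    rw [f.comm_fwd, hv, map_zero]
  bwd x := (M.bwd x).restrict fun v hv => by
    rw [LinearMap.mem_ker] at hv ⊢
    rw [f.comm_bwd, hv, map_zero]
  fwd_zero x h := LinearMap.ext fun v => Subtype.ext (by simp [M.fwd_zero x h])
  bwd_zero x h := LinearMap.ext fun v => Subtype.ext (by simp [M.bwd_zero x h])

theorem iso_dsum_ker {r : M.Hom X} (hr : r.IsRetraction) : M.Iso (X.dsum r.ker) := by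
  obtain ⟨s, hrs⟩ := hr
  let complement (x : ℕ) : M.V x →ₗ[k] r.ker.V x :=
    (LinearMap.id - (s.app x).comp (r.app x)).codRestrict (LinearMap.ker (r.app x))
      fun v => by simp [hrs]
  refine ⟨⟨fun x => (r.app x).prod (complement x), fun x v => ?_, fun x v => ?_⟩,
    fun x => ⟨?_, ?_⟩⟩
  · refine Prod.ext (r.comm_fwd x v) (Subtype.ext ?_)
    change M.fwd x v - s.app (x + 1) (r.app (x + 1) (M.fwd x v)) = M.fwd x (v - s.app x (r.app x v))
    rw [map_sub, r.comm_fwd, s.comm_fwd]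
  · refine Prod.ext (r.comm_bwd x v) (Subtype.ext ?_)
    change M.bwd x v - s.app x (r.app x (M.bwd x v)) = M.bwd x (v - s.app (x + 1) (r.app (x + 1) v))
    rw [map_sub, r.comm_bwd, s.comm_bwd]
  · refine (injective_iff_map_eq_zero _).2 fun v hv => ?_
    have hrv : r.app x v = 0 := congrArg Prod.fst hv
    have hv' : v - s.app x (r.app x v) = 0 := congrArg Subtype.val (congrArg Prod.snd hv)
    rwa [hrv, map_zero, sub_zero] at hv'
  · rintro ⟨w, u, hu : r.app x u = 0⟩
    have hr : r.app x (s.app x w + u) = w := by rw [map_add, hrs, hu, add_zero]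
    refine ⟨s.app x w + u, Prod.ext hr (Subtype.ext ?_)⟩
    change s.app x w + u - s.app x (r.app x (s.app x w + u)) = u
    rw [hr, add_sub_cancel_left]

theorem Indec.iso_of_isRetraction (hM : M.Indec) (hX : ¬X.IsZero) {r : M.Hom X}
    (hr : r.IsRetraction) : M.Iso X := by
  have hker : r.ker.IsZero := (hM.2 _ _ (iso_dsum_ker hr)).resolve_left hX
  obtain ⟨s, hrs⟩ := hr
  refine ⟨r, fun x => ⟨?_, fun w => ⟨_, hrs x w⟩⟩⟩
  rw [injective_iff_map_eq_zero]
  exact fun v hv => congrArg Subtype.val (hker x ⟨v, hv⟩)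

namespace Hom

theorem Irred.of_iso {X' Y' : ARep k n ε} {f : X.Hom Y} (hf : f.Irred) (hX : X.Iso X')
    (hY : Y.Iso Y') : ∃ f' : X'.Hom Y', f'.Irred := by
  obtain ⟨α, α', hα, hα'⟩ := hX.exists_inverse
  obtain ⟨β, β', hβ, hβ'⟩ := hY.exists_inverse
  obtain ⟨hsec, hret, hfac⟩ := hf
  refine ⟨β.comp (f.comp α'), ?_, ?_, fun Z h g hgh => ?_⟩
  · rintro ⟨g, hg⟩
    refine hsec ⟨α'.comp (g.comp β), fun x v => ?_⟩
    simpa [comp, hα] using congrArg (α'.app x) (hg x (α.app x v))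
  · rintro ⟨g, hg⟩
    refine hret ⟨α'.comp (g.comp β), fun x v => ?_⟩
    simpa [comp, hβ] using congrArg (β'.app x) (hg x (β.app x v))
  · refine (hfac Z (h.comp α) (β'.comp g) fun x v => ?_).imp ?_ ?_
    · simpa [comp, hα, hβ] using congrArg (β'.app x) (hgh x (α.app x v))
    · rintro ⟨s, hs⟩
      refine ⟨α.comp s, fun x v => ?_⟩
      simpa [comp, hα'] using congrArg (α.app x) (hs x (α'.app x v))
    · rintro ⟨s, hs⟩
      refine ⟨s.comp β', fun x v => ?_⟩
      simpa [comp, hβ'] using congrArg (β.app x) (hs x (β'.app x v))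

theorem Irred.exists_app_ne_zero {f : X.Hom Y} (hf : f.Irred) : ∃ x v, f.app x v ≠ 0 := by
  by_contra! hzero
  obtain ⟨hsec, hret, hfac⟩ := hf
  rcases hfac X (zero X X) f fun x v => by rw [hzero, hzero] with ⟨g, hg⟩ | h
  · have hX (x : ℕ) (v : X.V x) : v = 0 := (hg x v).symm.trans (map_zero _)
    exact hsec ⟨zero Y X, fun x v => (hX x _).trans (hX x v).symm⟩
  · exact hret h

end Hom

end Homs

section Intervals

variable {M : ARep k n ε} {a b c d x : ℕ}

/-- The embedding of `M(a,b)_x` into `k`: the coordinate of a vector with respect to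
`unitVec a b x`. -/
def coord : (intervalRep k n ε a b).V x →ₗ[k] k :=
  (fiber k (SuppCond n a b x)).subtype

/-- The basis vector of `M(a,b)_x` when `x` is in the support of `M(a,b)`, and zero otherwise. -/
def unitVec (a b x : ℕ) : (intervalRep k n ε a b).V x :=
  ⟨if SuppCond n a b x then 1 else 0, by
    by_cases h : SuppCond n a b x
    · rw [fiber, if_pos h]
      exact Submodule.mem_top
    · rw [if_neg h]
      exact Submodule.zero_mem _⟩

theorem coord_injective :
    Function.Injective (coord : (intervalRep k n ε a b).V x →ₗ[k] k) :=
  Subtype.val_injective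

theorem coord_unitVec :
    coord (unitVec a b x : (intervalRep k n ε a b).V x) = if SuppCond n a b x then 1 else 0 :=
  rfl

theorem suppCond_of_coord_ne_zero {v : (intervalRep k n ε a b).V x} (hv : coord v ≠ 0) :
    SuppCond n a b x := by
  obtain ⟨v, hmem⟩ := v
  by_contra h
  rw [fiber, if_neg h] at hmem
  exact hv hmem

theorem unitVec_ne_zero (h : SuppCond n a b x) :
    (unitVec a b x : (intervalRep k n ε a b).V x) ≠ 0 :=
  (map_ne_zero_iff _ coord_injective).1 (by simp [coord_unitVec, h])

theorem unitVec_of_not_suppCond (h : ¬SuppCond n a b x) :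
    (unitVec a b x : (intervalRep k n ε a b).V x) = 0 :=
  coord_injective (by rw [coord_unitVec, if_neg h, map_zero])

theorem coord_smul_unitVec (v : (intervalRep k n ε a b).V x) : coord v • unitVec a b x = v := by
  refine coord_injective ?_
  rw [map_smul, coord_unitVec]
  by_cases hv : coord v = 0
  · simp [hv]
  · simp [suppCond_of_coord_ne_zero hv]

theorem eq_zero_of_not_suppCond (hx : ¬SuppCond n a b x) (v : (intervalRep k n ε a b).V x) :
    v = 0 := by
  rw [← coord_smul_unitVec v, unitVec_of_not_suppCond hx, smul_zero]

theorem coord_fiberMap {P Q : Prop} (v : fiber k P) :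
    (fiberMap k P Q v : k) = if Q then (v : k) else 0 := by
  by_cases hP : P
  · by_cases hQ : Q <;> simp [fiberMap, hP, hQ]
  · have hv : (v : k) = 0 := by
      obtain ⟨v, hmem⟩ := v
      rwa [fiber, if_neg hP] at hmem
    simp [fiberMap, hP, hv]

theorem intervalRep_fwd (h : ε x = true) (v : (intervalRep k n ε a b).V x) :
    (intervalRep k n ε a b).fwd x v = coord v • unitVec a b (x + 1) := by
  have hfwd : coord ((intervalRep k n ε a b).fwd x v) =
      fiberMap k (SuppCond n a b x) (SuppCond n a b (x + 1)) v :=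
    congrArg (fun f : fiber k (SuppCond n a b x) →ₗ[k] fiber k (SuppCond n a b (x + 1)) =>
      (f v : k)) (if_pos h)
  refine coord_injective (hfwd.trans ((coord_fiberMap _).trans ?_))
  rw [map_smul, coord_unitVec, smul_eq_mul, mul_ite, mul_one, mul_zero]
  rfl

theorem intervalRep_bwd (h : ε x = false) (v : (intervalRep k n ε a b).V (x + 1)) :
    (intervalRep k n ε a b).bwd x v = coord v • unitVec a b x := by
  have hbwd : coord ((intervalRep k n ε a b).bwd x v) =
      fiberMap k (SuppCond n a b (x + 1)) (SuppCond n a b x) v :=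
    congrArg (fun f : fiber k (SuppCond n a b (x + 1)) →ₗ[k] fiber k (SuppCond n a b x) =>
      (f v : k)) (if_neg (by simp [h]))
  refine coord_injective (hbwd.trans ((coord_fiberMap _).trans ?_))
  rw [map_smul, coord_unitVec, smul_eq_mul, mul_ite, mul_one, mul_zero]
  rfl

theorem supp_intervalRep (ha : 1 ≤ a) (hb : b ≤ n + 2) :
    (intervalRep k n ε a b).supp = Set.Icc a b := by
  ext x
  constructor
  · rintro ⟨v, hv⟩
    have := suppCond_of_coord_ne_zero ((map_ne_zero_iff _ coord_injective).2 hv)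
    exact ⟨this.1, this.2.1⟩
  · rintro ⟨hax, hxb⟩
    exact ⟨unitVec a b x, unitVec_ne_zero ⟨hax, hxb, by omega, by omega⟩⟩

theorem IsClosedThread.fwd_apply {v : ∀ x, M.V x} (hv : M.IsClosedThread a b v)
    (h : ε x = true) (hx : SuppCond n a b x) :
    M.fwd x (v x) = if SuppCond n a b (x + 1) then v (x + 1) else 0 := by
  split_ifs with hx'
  · exact (hv.isThread x hx.1 hx'.2.1).1 h
  · obtain rfl | hlast : x = b ∨ x = n + 2 := by unfold SuppCond at hx hx'; omega
    · exact hv.right h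
    · exact M.triv _ (by omega) _

theorem IsClosedThread.bwd_apply {v : ∀ x, M.V x} (hv : M.IsClosedThread a b v)
    (h : ε x = false) (hx : SuppCond n a b (x + 1)) :
    M.bwd x (v (x + 1)) = if SuppCond n a b x then v x else 0 := by
  split_ifs with hx'
  · exact (hv.isThread x hx'.1 hx.2.1).2 h
  · obtain hleft | hfirst : x + 1 = a ∨ x = 0 := by unfold SuppCond at hx hx'; omega
    · exact hv.left x hleft h
    · exact M.triv _ (by omega) _

/-- The morphism `M(a,b) → M` that sends the basis vectors to a given closed thread of `M`. -/
def IsClosedThread.ofInterval {v : ∀ x, M.V x} (hv : M.IsClosedThread a b v) :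
    (intervalRep k n ε a b).Hom M :=
  Hom.ofArrows (fun x => coord.smulRight (v x))
    (fun x h u => by
      by_cases hu : coord u = 0
      · simp [intervalRep_fwd h, hu]
      · simp [intervalRep_fwd h, hv.fwd_apply h (suppCond_of_coord_ne_zero hu), coord_unitVec])
    (fun x h u => by
      by_cases hu : coord u = 0
      · simp [intervalRep_bwd h, hu]
      · simp [intervalRep_bwd h, hv.bwd_apply h (suppCond_of_coord_ne_zero hu), coord_unitVec])

/-- The morphism `M → M(a,b)` whose coordinates form a given closed thread of the dual of `M`. -/
def IsClosedThread.toInterval {p : ∀ x, Module.Dual k (M.V x)}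
    (hp : M.dual.IsClosedThread a b p) : M.Hom (intervalRep k n ε a b) :=
  Hom.ofArrows (fun x => (p x).smulRight (unitVec a b x))
    (fun x h w => by
      by_cases hx : SuppCond n a b (x + 1)
      · have hpx : p (x + 1) (M.fwd x w) = if SuppCond n a b x then p x w else 0 := by
          let eval : Module.Dual k (M.V x) → k := fun φ => φ w
          exact (congrArg eval (hp.bwd_apply (by simp [h]) hx)).trans (apply_ite eval _ _ _)
        simp [intervalRep_fwd h, hpx, coord_unitVec]
      · simp [intervalRep_fwd h, unitVec_of_not_suppCond hx])
    (fun x h w => by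
      by_cases hx : SuppCond n a b x
      · have hpx : p x (M.bwd x w) = if SuppCond n a b (x + 1) then p (x + 1) w else 0 := by
          let eval : Module.Dual k (M.V (x + 1)) → k := fun φ => φ w
          exact (congrArg eval (hp.fwd_apply (by simp [h]) hx)).trans (apply_ite eval _ _ _)
        simp [intervalRep_bwd h, hpx, coord_unitVec]
      · simp [intervalRep_bwd h, unitVec_of_not_suppCond hx])

end Intervals

section Gabriel

variable {M : ARep k n ε} {a b : ℕ}

theorem Indec.iso_intervalRep {v : ∀ x, M.V x} {p : ∀ x, Module.Dual k (M.V x)}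
    (hM : M.Indec) (hab : IsInterval n a b) (hv : M.IsClosedThread a b v)
    (hp : M.dual.IsClosedThread a b p) (hpv : p a (v a) ≠ 0) :
    M.Iso (intervalRep k n ε a b) := by
  have hne : ¬(intervalRep k n ε a b).IsZero := fun h =>
    unitVec_ne_zero ⟨le_rfl, hab.le, hab.one_le, hab.le.trans hab.le_last⟩ (h a (unitVec a b a))
  refine hM.iso_of_isRetraction hne (r := hp.toInterval)
    ⟨hv.ofInterval.smul (p a (v a))⁻¹, fun x u => ?_⟩
  by_cases hu : coord u = 0
  · rw [coord_injective (hu.trans (map_zero _).symm), map_zero, map_zero]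
  · have hx := suppCond_of_coord_ne_zero hu
    have hpx : p x (v x) = p a (v a) := hv.isThread.pairing_eq hp.isThread hx.1 hx.2.1
    calc hp.toInterval.app x ((hv.ofInterval.smul (p a (v a))⁻¹).app x u)
      _ = p x ((p a (v a))⁻¹ • coord u • v x) • unitVec a b x := rfl
      _ = coord u • unitVec a b x := by
        rw [map_smul, map_smul, hpx, smul_eq_mul, smul_eq_mul, mul_left_comm,
          inv_mul_cancel₀ hpv, mul_one]
      _ = u := coord_smul_unitVec u

theorem Indec.exists_iso_intervalRep (hM : M.Indec) :
    ∃ a b, IsInterval n a b ∧ M.Iso (intervalRep k n ε a b) := by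
  have hsupp : ∃ x, ∃ u : M.V x, u ≠ 0 := by simpa [IsZero] using hM.1
  obtain ⟨a, hne, hbefore⟩ : ∃ a, (∃ u : M.V a, u ≠ 0) ∧ ∀ x < a, ∀ u : M.V x, u = 0 :=
    ⟨Nat.find hsupp, Nat.find_spec hsupp, fun x hx => by simpa using Nat.find_min hsupp hx⟩
  have ha : 1 ≤ a ∧ a ≤ n + 2 := by
    obtain ⟨u, hu⟩ := hne
    by_contra h
    exact hu (M.triv a (by omega) u)
  obtain ⟨b, hab, hb, _, ⟨v, hv, rfl, hvb⟩, _, ⟨p, hp, rfl, hpb⟩, hpv⟩ :=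
    exists_pairing_ne_zero ha.2 hne
  have hvc : M.IsClosedThread a b v :=
    ⟨hv, fun x hx _ => hbefore x (by omega) _, mem_closing.1 hvb⟩
  have hdual (x : ℕ) (hx : x < a) (φ : Module.Dual k (M.V x)) : φ = 0 :=
    LinearMap.ext fun u => by rw [hbefore x hx u, map_zero, map_zero]
  have hpc : M.dual.IsClosedThread a b p :=
    ⟨hp, fun x hx _ => hdual x (by omega) _, mem_closing.1 hpb⟩
  have hInt : IsInterval n a b := ⟨ha.1, hab, hb⟩
  exact ⟨a, b, hInt, hM.iso_intervalRep hInt hvc hpc hpv⟩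

end Gabriel

end ARep

section EndpointOrders

/-- The order on the right ends of intervals for which a nonzero morphism `M(a,b) → M(c,d)` forces
`b` to precede `d`. -/
def RightLE (ε : ℕ → Bool) (b d : ℕ) : Prop :=
  (b < d → ε b = false) ∧ (d < b → ε d = true)

/-- The order on the left ends of intervals for which a nonzero morphism `M(a,b) → M(c,d)` forces
`a` to precede `c`. -/
def LeftLE (ε : ℕ → Bool) (a c : ℕ) : Prop :=
  (c < a → ε (a - 1) = true) ∧ (a < c → ε (c - 1) = false)

variable {a b c d : ℕ}

theorem RightLE.refl (ε : ℕ → Bool) (b : ℕ) : RightLE ε b b := by simp [RightLE]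

theorem LeftLE.refl (ε : ℕ → Bool) (a : ℕ) : LeftLE ε a a := by simp [LeftLE]

theorem RightLE.antisymm (h : RightLE ε b d) (h' : RightLE ε d b) : b = d := by
  rcases lt_trichotomy b d with hlt | heq | hlt
  · simpa [h.1 hlt] using h'.2 hlt
  · exact heq
  · simpa [h.2 hlt] using h'.1 hlt

theorem LeftLE.antisymm (h : LeftLE ε a c) (h' : LeftLE ε c a) : a = c := by
  rcases lt_trichotomy a c with hlt | heq | hlt
  · simpa [h.2 hlt] using h'.1 hlt
  · exact heq
  · simpa [h.1 hlt] using h'.2 hlt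

theorem RightLE.min_le {q : ℕ} (h : RightLE ε b q) (h' : RightLE ε q d) : min b d ≤ q := by
  by_contra! hq
  simpa [h.2 (by omega)] using h'.1 (by omega)

theorem LeftLE.le_max {p : ℕ} (h : LeftLE ε a p) (h' : LeftLE ε p c) : p ≤ max a c := by
  by_contra! hp
  simpa [h.2 (by omega)] using h'.1 (by omega)

theorem rightLE_not : RightLE (fun x => !ε x) b d ↔ RightLE ε d b := by
  simp [RightLE, and_comm]

theorem leftLE_not : LeftLE (fun x => !ε x) a c ↔ LeftLE ε c a := by
  simp [LeftLE, and_comm]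

end EndpointOrders

section HomsBetweenIntervals

namespace ARep

variable {M N : ARep k n ε} {a b c d x : ℕ}

theorem IsClosedThread.map {v : ∀ x, M.V x} (hv : M.IsClosedThread a b v) (f : M.Hom N) :
    N.IsClosedThread a b fun x => f.app x (v x) where
  isThread x hax hxb := by
    obtain ⟨hfwd, hbwd⟩ := hv.isThread x hax hxb
    exact ⟨fun h => by rw [← f.comm_fwd, hfwd h], fun h => by rw [← f.comm_bwd, hbwd h]⟩
  left x hxa h := by rw [← f.comm_bwd, hv.left x hxa h, map_zero]
  right h := by rw [← f.comm_fwd, hv.right h, map_zero]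

theorem isClosedThread_unitVec (ha : 1 ≤ a) (hb : b ≤ n + 2) (hac : LeftLE ε a c)
    (hbd : RightLE ε b d) : (intervalRep k n ε c d).IsClosedThread a b (unitVec c d) where
  isThread x hax hxb := by
    refine ⟨fun h => ?_, fun h => ?_⟩
    · rw [intervalRep_fwd h, coord_unitVec, ite_smul, one_smul, zero_smul]
      split_ifs with hx
      · rfl
      · refine (unitVec_of_not_suppCond fun hx' => ?_).symm
        obtain rfl : c = x + 1 := by unfold SuppCond at hx hx'; omega
        simpa [h] using hac.2 (by omega)
    · rw [intervalRep_bwd h, coord_unitVec, ite_smul, one_smul, zero_smul]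
      split_ifs with hx
      · rfl
      · refine (unitVec_of_not_suppCond fun hx' => ?_).symm
        obtain rfl : d = x := by unfold SuppCond at hx hx'; omega
        simpa [h] using hbd.2 (by omega)
  left x hxa h := by
    subst hxa
    rw [intervalRep_bwd h, coord_unitVec, ite_smul, one_smul, zero_smul]
    split_ifs with hx
    · refine unitVec_of_not_suppCond fun hx' => ?_
      simpa [h] using hac.1 (by unfold SuppCond at hx'; omega)
    · rfl
  right h := by
    rw [intervalRep_fwd h, coord_unitVec, ite_smul, one_smul, zero_smul]
    split_ifs with hx
    · refine unitVec_of_not_suppCond fun hx' => ?_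
      simpa [h] using hbd.1 (by unfold SuppCond at hx'; omega)
    · rfl

theorem Joined.coord_eq {v : (intervalRep k n ε c d).V x} {w : (intervalRep k n ε c d).V (x + 1)}
    (h : (intervalRep k n ε c d).Joined x v w) (hx : SuppCond n c d x)
    (hx' : SuppCond n c d (x + 1)) : coord w = coord v := by
  cases hε : ε x with
  | true => rw [← h.1 hε, intervalRep_fwd hε]; simp [coord_unitVec, hx']
  | false => rw [← h.2 hε, intervalRep_bwd hε]; simp [coord_unitVec, hx]

theorem IsThread.coord_eq {v : ∀ x, (intervalRep k n ε c d).V x}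
    (hv : (intervalRep k n ε c d).IsThread a b v) {x y : ℕ} (hxy : x ≤ y)
    (hax : a ≤ x) (hx : SuppCond n c d x) (hyb : y ≤ b) (hy : SuppCond n c d y) :
    coord (v y) = coord (v x) := by
  induction y, hxy using Nat.le_induction with
  | base => rfl
  | succ y hxy ih =>
    have hy' : SuppCond n c d y := by unfold SuppCond at *; omega
    rw [(hv y (by omega) hyb).coord_eq hy' hy, ih (by omega) hy']

theorem IsClosedThread.rightLE {v : ∀ x, (intervalRep k n ε c d).V x}
    (hv : (intervalRep k n ε c d).IsClosedThread a b v) (hd : d ≤ n + 2) (ha : a ≤ min b d)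
    (hne : v (min b d) ≠ 0) : RightLE ε b d := by
  refine ⟨fun hbd => ?_, fun hdb => ?_⟩
  · rw [min_eq_left hbd.le] at hne
    have hb := not_imp_comm.1 (fun h => eq_zero_of_not_suppCond h (v b)) hne
    by_contra hε
    have hkill := hv.right (by simpa using hε)
    rw [intervalRep_fwd (by simpa using hε)] at hkill
    exact smul_ne_zero ((map_ne_zero_iff _ coord_injective).2 hne)
      (unitVec_ne_zero (by unfold SuppCond at *; omega)) hkill
  · rw [min_eq_right hdb.le] at ha hne
    by_contra hε
    refine hne ?_
    rw [← (hv.isThread d ha hdb).2 (by simpa using hε),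
      eq_zero_of_not_suppCond (by unfold SuppCond; omega) (v (d + 1)), map_zero]

theorem IsClosedThread.leftLE {v : ∀ x, (intervalRep k n ε c d).V x}
    (hv : (intervalRep k n ε c d).IsClosedThread a b v) (hc : 1 ≤ c) (hb : max a c ≤ b)
    (hne : v (max a c) ≠ 0) : LeftLE ε a c := by
  refine ⟨fun hca => ?_, fun hac => ?_⟩
  · obtain ⟨x, rfl⟩ : ∃ x, a = x + 1 := ⟨a - 1, by omega⟩
    rw [max_eq_left hca.le] at hne
    have ha := not_imp_comm.1 (fun h => eq_zero_of_not_suppCond h (v (x + 1))) hne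
    by_contra hε
    have hkill := hv.left x rfl (by simpa using hε)
    rw [intervalRep_bwd (by simpa using hε)] at hkill
    exact smul_ne_zero ((map_ne_zero_iff _ coord_injective).2 hne)
      (unitVec_ne_zero (by unfold SuppCond at *; omega)) hkill
  · obtain ⟨x, rfl⟩ : ∃ x, c = x + 1 := ⟨c - 1, by omega⟩
    rw [max_eq_right hac.le] at hb hne
    by_contra hε
    refine hne ?_
    rw [← (hv.isThread x (by omega) hb).1 (by simpa using hε),
      eq_zero_of_not_suppCond (by unfold SuppCond; omega) (v x), map_zero]

-- The scalar is read off at the first vertex `max a c` of the intersection of the supports.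
theorem Hom.exists_eq_smul_unitVec (f : (intervalRep k n ε a b).Hom (intervalRep k n ε c d))
    (ha : 1 ≤ a) (hb : b ≤ n + 2) :
    ∃ t : k, ∀ x u, f.app x u = (t * coord u) • unitVec c d x := by
  have hv := ((isClosedThread_unitVec ha hb (.refl ε a) (.refl ε b)).map f).isThread
  refine ⟨coord (f.app (max a c) (unitVec a b (max a c))), fun x u => ?_⟩
  by_cases hcd : SuppCond n c d x
  · by_cases hu : coord u = 0
    · rw [hu, mul_zero, zero_smul, coord_injective (hu.trans (map_zero _).symm), map_zero]
    · obtain ⟨hax, hxb, -, -⟩ := suppCond_of_coord_ne_zero hu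
      have hcoord := hv.coord_eq (max_le hax hcd.1) (le_max_left a c)
        (by unfold SuppCond at *; omega) hxb hcd
      rw [← hcoord, mul_comm, mul_smul, coord_smul_unitVec, ← map_smul, coord_smul_unitVec]
  · rw [eq_zero_of_not_suppCond hcd (f.app x u), unitVec_of_not_suppCond hcd, smul_zero]

theorem Hom.leftLE_and_rightLE (hab : IsInterval n a b) (hcd : IsInterval n c d)
    {f : (intervalRep k n ε a b).Hom (intervalRep k n ε c d)} {u : (intervalRep k n ε a b).V x}
    (hfu : f.app x u ≠ 0) : max a c ≤ min b d ∧ LeftLE ε a c ∧ RightLE ε b d := by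
  obtain ⟨ha, -, hb⟩ := hab
  obtain ⟨hc, -, hd⟩ := hcd
  obtain ⟨t, hf⟩ := f.exists_eq_smul_unitVec ha hb
  have hx : SuppCond n c d x := not_imp_comm.1 (eq_zero_of_not_suppCond · _) hfu
  have htu : t * coord u ≠ 0 := fun h => hfu (by rw [hf, h, zero_smul])
  have hx' : SuppCond n a b x := suppCond_of_coord_ne_zero (right_ne_zero_of_mul htu)
  have hoverlap : max a c ≤ min b d := by unfold SuppCond at *; omega
  have hv := (isClosedThread_unitVec ha hb (.refl ε a) (.refl ε b)).map f
  have hne (y : ℕ) (hay : max a c ≤ y) (hyb : y ≤ min b d) : f.app y (unitVec a b y) ≠ 0 := by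
    have hy : SuppCond n a b y := by unfold SuppCond; omega
    rw [hf, coord_unitVec, if_pos hy, mul_one]
    exact smul_ne_zero (left_ne_zero_of_mul htu) (unitVec_ne_zero (by unfold SuppCond; omega))
  exact ⟨hoverlap, hv.leftLE hc (by omega) (hne _ le_rfl hoverlap),
    hv.rightLE hd (by omega) (hne _ hoverlap le_rfl)⟩

theorem eq_of_isSection (hab : IsInterval n a b) (hcd : IsInterval n c d)
    {f : (intervalRep k n ε a b).Hom (intervalRep k n ε c d)} (hf : f.IsSection) :
    a = c ∧ b = d := by
  obtain ⟨g, hgf⟩ := hf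
  have ha : (unitVec a b a : (intervalRep k n ε a b).V a) ≠ 0 :=
    unitVec_ne_zero ⟨le_rfl, hab.le, hab.one_le, hab.le.trans hab.le_last⟩
  have hg : g.app a (f.app a (unitVec a b a)) ≠ 0 := by rwa [hgf]
  have hf : f.app a (unitVec a b a) ≠ 0 := fun h => hg (by rw [h, map_zero])
  obtain ⟨-, hac, hbd⟩ := Hom.leftLE_and_rightLE hab hcd hf
  obtain ⟨-, hca, hdb⟩ := Hom.leftLE_and_rightLE hcd hab hg
  exact ⟨hac.antisymm hca, hbd.antisymm hdb⟩

end ARep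

end HomsBetweenIntervals

section Covers

/-- `d` covers `b` in the order `RightLE ε` on the right ends. -/
structure RightCovBy (n : ℕ) (ε : ℕ → Bool) (b d : ℕ) : Prop where
  ne : b ≠ d
  le : RightLE ε b d
  eq_or_eq : ∀ q, min b d ≤ q → q ≤ n + 2 → RightLE ε b q → RightLE ε q d → q = b ∨ q = d

/-- `c` covers `a` in the order `LeftLE ε` on the left ends. -/
structure LeftCovBy (ε : ℕ → Bool) (a c : ℕ) : Prop where
  ne : a ≠ c
  le : LeftLE ε a c
  eq_or_eq : ∀ p, 1 ≤ p → p ≤ max a c → LeftLE ε a p → LeftLE ε p c → p = a ∨ p = c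

variable {a b c d lo hi : ℕ}

theorem isHook_not : IsHook n (fun x => !ε x) a lo hi ↔ IsCohook n ε a lo hi := by
  cases h : ε a <;> simp [IsHook, IsCohook, h]

theorem RightCovBy.not (h : RightCovBy n ε b d) : RightCovBy n (fun x => !ε x) d b where
  ne := h.ne.symm
  le := rightLE_not.2 h.le
  eq_or_eq q hmin hq hdq hqb :=
    (h.eq_or_eq q (by omega) hq (rightLE_not.1 hqb) (rightLE_not.1 hdq)).symm

theorem LeftCovBy.not (h : LeftCovBy ε a c) : LeftCovBy (fun x => !ε x) c a where
  ne := h.ne.symm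
  le := leftLE_not.2 h.le
  eq_or_eq p hp hmax hcp hpa :=
    (h.eq_or_eq p hp (by omega) (leftLE_not.1 hpa) (leftLE_not.1 hcp)).symm

theorem RightCovBy.isHook (h : RightCovBy n ε b d) (hbd : b < d) (hd : d ≤ n + 2) :
    ε b = false ∧ IsHook n ε b (b + 1) d := by
  have hb : ε b = false := h.le.1 hbd
  have hcov {q : ℕ} (hbq : b < q) (hq : q ≤ n + 2) (hqd : RightLE ε q d) : q = d :=
    (h.eq_or_eq q (by omega) hq ⟨fun _ => hb, by omega⟩ hqd).resolve_left (by omega)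
  rw [IsHook, if_neg (by simp [hb])]
  refine ⟨hb, rfl, hbd, hd, fun ℓ hbℓ hℓd => ?_, ?_⟩
  · by_contra hℓ
    exact hℓd.ne (hcov hbℓ (by omega) ⟨fun _ => by simpa using hℓ, by omega⟩)
  · by_contra! hlast
    have := hcov (q := d + 1) (by omega) (by omega) ⟨by omega, fun _ => by simpa using hlast.2⟩
    omega

theorem LeftCovBy.isHook (h : LeftCovBy ε a c) (hca : c < a) (hc : 1 ≤ c) :
    ε (a - 1) = true ∧ IsHook n ε (a - 1) c (a - 1) := by
  have ha : ε (a - 1) = true := h.le.1 hca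
  have hcov {p : ℕ} (hp : 1 ≤ p) (hpa : p < a) (hpc : LeftLE ε p c) : p = c :=
    (h.eq_or_eq p hp (by omega) ⟨fun _ => ha, by omega⟩ hpc).resolve_left (by omega)
  rw [IsHook, if_pos ha]
  refine ⟨ha, rfl, hc, by omega, fun ℓ hcℓ hℓa => ?_, ?_⟩
  · by_contra hℓ
    have := hcov (p := ℓ + 1) (by omega) (by omega) ⟨fun _ => by simpa using hℓ, by omega⟩
    omega
  · by_contra! hfirst
    have := hcov (p := c - 1) (by omega) (by omega) ⟨by omega, fun _ => by simpa using hfirst.2⟩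
    omega

theorem RightCovBy.isCohook (h : RightCovBy n ε b d) (hdb : d < b) (hb : b ≤ n + 2) :
    ε d = true ∧ IsCohook n ε d (d + 1) b := by
  simpa [isHook_not] using h.not.isHook hdb hb

theorem LeftCovBy.isCohook (h : LeftCovBy ε a c) (hac : a < c) (ha : 1 ≤ a) :
    ε (c - 1) = false ∧ IsCohook n ε (c - 1) a (c - 1) := by
  simpa [isHook_not] using h.not.isHook hac ha

end Covers

section Irreducible

namespace ARep

variable {X Y N : ARep k n ε} {a b c d : ℕ}

theorem Hom.Irred.eq_or_eq (hab : IsInterval n a b) (hcd : IsInterval n c d)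
    {f : (intervalRep k n ε a b).Hom (intervalRep k n ε c d)} (hf : f.Irred) {p q : ℕ}
    (hpq : IsInterval n p q) (hap : LeftLE ε a p) (hpc : LeftLE ε p c) (hbq : RightLE ε b q)
    (hqd : RightLE ε q d) : (a = p ∧ b = q) ∨ (c = p ∧ d = q) := by
  obtain ⟨t, ht⟩ := f.exists_eq_smul_unitVec hab.one_le hab.le_last
  let h := (isClosedThread_unitVec (k := k) hab.one_le hab.le_last hap hbq).ofInterval
  let g := (isClosedThread_unitVec (k := k) hpq.one_le hpq.le_last hpc hqd).ofInterval
  refine (hf.2.2 _ h (g.smul t) fun x u => ?_).imp (eq_of_isSection hab hpq)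
    fun ⟨s, hs⟩ => eq_of_isSection hcd hpq ⟨_, hs⟩
  change f.app x u = t • coord (coord u • (unitVec p q x : (intervalRep k n ε p q).V x)) •
    unitVec c d x
  rw [ht, map_smul, coord_unitVec, mul_smul]
  by_cases hpqx : SuppCond n p q x
  · simp [hpqx]
  by_cases hu : coord u = 0
  · simp [hu]
  have habx : SuppCond n a b x := suppCond_of_coord_ne_zero hu
  have hcdx : ¬SuppCond n c d x := by
    have := hap.le_max hpc
    have := hbq.min_le hqd
    unfold SuppCond at *
    omega
  simp [unitVec_of_not_suppCond hcdx]

theorem Hom.Irred.not_eq_and_eq (ha : 1 ≤ a) (hb : b ≤ n + 2)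
    {f : (intervalRep k n ε a b).Hom (intervalRep k n ε c d)} (hf : f.Irred) :
    ¬(a = c ∧ b = d) := by
  rintro ⟨rfl, rfl⟩
  obtain ⟨t, ht⟩ := f.exists_eq_smul_unitVec ha hb
  obtain ⟨x, u, hu⟩ := hf.exists_app_ne_zero
  have ht0 : t ≠ 0 := by rintro rfl; simp [ht] at hu
  refine hf.1 ⟨(Hom.id _).smul t⁻¹, fun x u => ?_⟩
  change t⁻¹ • f.app x u = u
  rw [ht, mul_smul, coord_smul_unitVec, inv_smul_smul₀ ht0]

theorem Hom.Irred.covBy (hab : IsInterval n a b) (hcd : IsInterval n c d)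
    {f : (intervalRep k n ε a b).Hom (intervalRep k n ε c d)} (hf : f.Irred) :
    (a = c ∧ RightCovBy n ε b d) ∨ (b = d ∧ LeftCovBy ε a c) := by
  obtain ⟨x, u, hfu⟩ := hf.exists_app_ne_zero
  obtain ⟨hoverlap, hac, hbd⟩ := leftLE_and_rightLE hab hcd hfu
  have hne := hf.not_eq_and_eq hab.one_le hab.le_last
  have hcb : IsInterval n c b := ⟨hcd.one_le, by omega, hab.le_last⟩
  obtain ⟨rfl, -⟩ | ⟨-, rfl⟩ := hf.eq_or_eq hab hcd hcb hac (.refl ε c) (.refl ε b) hbd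
  · refine .inl ⟨rfl, by simpa using hne, hbd, fun q hmin hq hbq hqd => ?_⟩
    have := hf.eq_or_eq hab hcd ⟨hab.one_le, by omega, hq⟩ hac hac hbq hqd
    omega
  · refine .inr ⟨rfl, by simpa using hne, hac, fun p hp hmax hap hpc => ?_⟩
    have := hf.eq_or_eq hab hcd ⟨hp, by omega, hab.le_last⟩ hap hpc hbd hbd
    omega

/-- `N` is obtained from `M(i,j)` by adding a hook at the right or at the left end. -/
def IsHookExtension (N : ARep k n ε) (i j : ℕ) : Prop :=
  (∃ ℓ, j + 1 ≤ n + 2 ∧ ε j = false ∧ IsHook n ε j (j + 1) ℓ ∧ N.Iso (intervalRep k n ε i ℓ)) ∨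
    ∃ h, 2 ≤ i ∧ ε (i - 1) = true ∧ IsHook n ε (i - 1) h (i - 1) ∧ N.Iso (intervalRep k n ε h j)

/-- `M(i,j)` is obtained from `N` by removing a cohook at the right or at the left end. -/
def IsCohookExtension (N : ARep k n ε) (i j : ℕ) : Prop :=
  (∃ ℓ, j + 1 ≤ n + 2 ∧ ε j = true ∧ IsCohook n ε j (j + 1) ℓ ∧ N.Iso (intervalRep k n ε i ℓ)) ∨
    ∃ h, 2 ≤ i ∧ ε (i - 1) = false ∧ IsCohook n ε (i - 1) h (i - 1) ∧
      N.Iso (intervalRep k n ε h j)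

theorem Hom.Irred.isHookExtension_or_isCohookExtension {f : X.Hom Y} (hf : f.Irred)
    (hab : IsInterval n a b) (hX : X.Iso (intervalRep k n ε a b))
    (hcd : IsInterval n c d) (hY : Y.Iso (intervalRep k n ε c d)) :
    (X.supp ⊂ Y.supp ∧ Y.IsHookExtension a b) ∨ (Y.supp ⊂ X.supp ∧ X.IsCohookExtension c d) := by
  obtain ⟨f', hf'⟩ := hf.of_iso hX hY
  rw [hX.supp_eq, hY.supp_eq, supp_intervalRep hab.one_le hab.le_last,
    supp_intervalRep hcd.one_le hcd.le_last]
  obtain ⟨ha, hab', hb⟩ := hab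
  obtain ⟨hc, hcd', hd⟩ := hcd
  obtain ⟨rfl, hcov⟩ | ⟨rfl, hcov⟩ := hf'.covBy ⟨ha, hab', hb⟩ ⟨hc, hcd', hd⟩
  · obtain hbd | hdb := hcov.ne.lt_or_gt
    · obtain ⟨hε, hhook⟩ := hcov.isHook hbd hd
      exact .inl ⟨Set.Icc_ssubset_Icc_right hcd' le_rfl hbd, .inl ⟨d, by omega, hε, hhook, hY⟩⟩
    · obtain ⟨hε, hcohook⟩ := hcov.isCohook hdb hb
      exact .inr ⟨Set.Icc_ssubset_Icc_right hab' le_rfl hdb, .inl ⟨b, by omega, hε, hcohook, hX⟩⟩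
  · obtain hac | hca := hcov.ne.lt_or_gt
    · obtain ⟨hε, hcohook⟩ := hcov.isCohook hac ha
      exact .inr ⟨Set.Icc_ssubset_Icc_left hab' hac le_rfl, .inr ⟨a, by omega, hε, hcohook, hX⟩⟩
    · obtain ⟨hε, hhook⟩ := hcov.isHook hca hc
      exact .inl ⟨Set.Icc_ssubset_Icc_left hcd' hca le_rfl, .inr ⟨c, by omega, hε, hhook, hY⟩⟩

end ARep

end Irreducible

end Representations

/-- classification of irreducible morphisms into/out of `M(i,j)` via hooks
and cohooks, and the fact that all irreducible morphisms between indecomposables are of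
this form. -/
theorem stmt_6 (k : Type) [Field k] (n : ℕ) (ε : ℕ → Bool) (i j : ℕ)
    (h1 : 1 ≤ i) (h2 : i ≤ j) (h3 : j ≤ n + 2)
    (N : ARep k n ε) (hN : N.Indec) (hsupp : Set.Icc i j ⊂ N.supp) :
    ((∃ f : (intervalRep k n ε i j).Hom N, f.Irred) →
      ((∃ ℓ, j + 1 ≤ n + 2 ∧ ε j = false ∧ IsHook n ε j (j + 1) ℓ ∧
          N.Iso (intervalRep k n ε i ℓ)) ∨
       (∃ h, 2 ≤ i ∧ ε (i - 1) = true ∧ IsHook n ε (i - 1) h (i - 1) ∧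
          N.Iso (intervalRep k n ε h j)))) ∧
    ((∃ f : N.Hom (intervalRep k n ε i j), f.Irred) →
      ((∃ ℓ, j + 1 ≤ n + 2 ∧ ε j = true ∧ IsCohook n ε j (j + 1) ℓ ∧
          N.Iso (intervalRep k n ε i ℓ)) ∨
       (∃ h, 2 ≤ i ∧ ε (i - 1) = false ∧ IsCohook n ε (i - 1) h (i - 1) ∧
          N.Iso (intervalRep k n ε h j)))) ∧
    (∀ (X Y : ARep k n ε), X.Indec → Y.Indec → ∀ f : X.Hom Y, f.Irred →
      ∃ i' j', 1 ≤ i' ∧ i' ≤ j' ∧ j' ≤ n + 2 ∧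
        ((X.Iso (intervalRep k n ε i' j') ∧
           ((∃ ℓ, j' + 1 ≤ n + 2 ∧ ε j' = false ∧ IsHook n ε j' (j' + 1) ℓ ∧
               Y.Iso (intervalRep k n ε i' ℓ)) ∨
            (∃ h, 2 ≤ i' ∧ ε (i' - 1) = true ∧ IsHook n ε (i' - 1) h (i' - 1) ∧
               Y.Iso (intervalRep k n ε h j')))) ∨
         (Y.Iso (intervalRep k n ε i' j') ∧
           ((∃ ℓ, j' + 1 ≤ n + 2 ∧ ε j' = true ∧ IsCohook n ε j' (j' + 1) ℓ ∧
               X.Iso (intervalRep k n ε i' ℓ)) ∨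
            (∃ h, 2 ≤ i' ∧ ε (i' - 1) = false ∧ IsCohook n ε (i' - 1) h (i' - 1) ∧
               X.Iso (intervalRep k n ε h j')))))) := by
  obtain ⟨c, d, hcd, hN'⟩ := hN.exists_iso_intervalRep
  have hij : IsInterval n i j := ⟨h1, h2, h3⟩
  have hM : (intervalRep k n ε i j).supp ⊂ N.supp := by rwa [ARep.supp_intervalRep h1 h3]
  refine ⟨fun ⟨f, hf⟩ => ?_, fun ⟨f, hf⟩ => ?_, fun X Y hX hY f hf => ?_⟩
  · obtain ⟨-, hook⟩ | ⟨hlt, -⟩ :=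
      hf.isHookExtension_or_isCohookExtension hij (.refl _) hcd hN'
    · exact hook
    · exact absurd hlt hM.asymm
  · obtain ⟨hlt, -⟩ | ⟨-, cohook⟩ :=
      hf.isHookExtension_or_isCohookExtension hcd hN' hij (.refl _)
    · exact absurd hlt hM.asymm
    · exact cohook
  · obtain ⟨a, b, hab, hX'⟩ := hX.exists_iso_intervalRep
    obtain ⟨p, q, hpq, hY'⟩ := hY.exists_iso_intervalRep
    obtain ⟨-, hook⟩ | ⟨-, cohook⟩ :=
      hf.isHookExtension_or_isCohookExtension hab hX' hpq hY'
    · exact ⟨a, b, hab.one_le, hab.le, hab.le_last, .inl ⟨hX', hook⟩⟩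
    · exact ⟨p, q, hpq.one_le, hpq.le, hpq.le_last, .inr ⟨hY', cohook⟩⟩

end CambrianA
end
end

section
/- Let M₁ = M(a+1, b) and M₂ = M(c+1, d) be indecomposable representations of Q, with corresponding segments γ₁ = γ(a,b) and γ₂ = γ(c,d) in P(Q), and suppose there is a non-split short exact sequence 0 → M₁ → E → M₂ → 0 in rep Q. Then the following are equivalent: (1) Hom(M₁, M₂) ≠ 0; (2) E is decomposable; (3) γ₁ and γ₂ cross and the slope of γ₂ is larger than the slope of γ₁. -/
open scoped Classical

noncomputable section

namespace CambrianA

/-! Choosing lifts to `E` of the generators of `M₂`, the extension is recorded by one scalar per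
arrow going from the support of `M₂` to that of `M₁`. The quiver being a tree, these scalars are
the differences of a potential `T : ℕ → k`, which is constant to the left and to the right of the
overlap of the two supports, and the sequence splits as soon as `T` can be normalized to vanish on
whichever side carries an arrow from `M₂` to `M₁`. So for a non-split sequence there are such
arrows at both ends of the overlap and `T` takes different values there; normalizing `T` to be zero
on the left, respectively on the right, produces embeddings of `M(c+1, b)` and `M(a+1, d)` in `E`,
of which `E` is the direct sum. If the supports overlap, both summands are nonzero; if they are
merely adjacent, one summand is zero and `E` is an interval representation, hence
indecomposable. The orientation of the two end arrows also makes the overlap a quotient of `M₁`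
and a subrepresentation of `M₂`, and, by convexity, places the ends of `γ₁` and `γ₂` so that
`γ₂` passes from below `γ₁` to above it. All three conditions thus say that the supports
overlap. -/

section Representations

variable {k : Type} [Field k] {n : ℕ} {ε : ℕ → Bool}

/-- The arrows `x → y` of the quiver, so that both orientations can be treated at once. Arrows
between all consecutive natural numbers are included, since representations are zero outside
`{1, …, n + 2}`. -/
inductive Arrow (ε : ℕ → Bool) : ℕ → ℕ → Type
  | fwd (l : ℕ) (h : ε l = true) : Arrow ε l (l + 1)
  | bwd (l : ℕ) (h : ε l = false) : Arrow ε (l + 1) l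

theorem Arrow.adjacent {x y : ℕ} (α : Arrow ε x y) :
    (y = x + 1 ∧ ε x = true) ∨ (x = y + 1 ∧ ε y = false) := by
  cases α with
  | fwd l h => exact Or.inl ⟨rfl, h⟩
  | bwd l h => exact Or.inr ⟨rfl, h⟩

theorem Arrow.eq_succ_of_forall_eq {X : Type*} {T : ℕ → X} {l : ℕ}
    (h : ∀ x y : ℕ, Arrow ε x y → min x y = l → T x = T y) : T l = T (l + 1) := by
  rcases hl : ε l with _ | _
  · exact (h _ _ (.bwd l hl) (by simp)).symm
  · exact h _ _ (.fwd l hl) (by simp)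

theorem Arrow.exists_potential {G : Type*} [AddCommGroup G]
    (η : ∀ {x y : ℕ}, Arrow ε x y → G) :
    ∃ T : ℕ → G, ∀ {x y : ℕ} (α : Arrow ε x y), T y = T x + η α := by
  let s (l : ℕ) : G :=
    if h : ε l = true then η (.fwd l h) else -η (.bwd l (Bool.eq_false_iff.2 h))
  refine ⟨fun x => ∑ l ∈ Finset.range x, s l, fun α => ?_⟩
  cases α with
  | fwd l h => simp [Finset.sum_range_succ, s, h]
  | bwd l h => simp [Finset.sum_range_succ, s, h]

/-- The structure map of a representation along an arrow. -/
def ARep.arrowMap (M : ARep k n ε) : ∀ {x y : ℕ}, Arrow ε x y → M.V x →ₗ[k] M.V y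
  | _, _, .fwd l _ => M.fwd l
  | _, _, .bwd l _ => M.bwd l

theorem ARep.Hom.comm {M N : ARep k n ε} (f : M.Hom N) {x y : ℕ} (α : Arrow ε x y) (v : M.V x) :
    f.app y (M.arrowMap α v) = N.arrowMap α (f.app x v) := by
  cases α with
  | fwd => exact f.comm_fwd _ v
  | bwd => exact f.comm_bwd _ v

/-- A morphism of representations from linear maps commuting with the structure maps of all
arrows. -/
def ARep.Hom.ofComm {M N : ARep k n ε} (f : ∀ x, M.V x →ₗ[k] N.V x)
    (hf : ∀ {x y : ℕ} (α : Arrow ε x y) (v : M.V x),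
      f y (M.arrowMap α v) = N.arrowMap α (f x v)) : M.Hom N where
  app := f
  comm_fwd l v := by
    rcases hl : ε l with _ | _
    · simp [M.fwd_zero l hl, N.fwd_zero l hl]
    · exact hf (.fwd l hl) v
  comm_bwd l v := by
    rcases hl : ε l with _ | _
    · exact hf (.bwd l hl) v
    · simp [M.bwd_zero l hl, N.bwd_zero l hl]

theorem ARep.arrowMap_dsum (M N : ARep k n ε) {x y : ℕ} (α : Arrow ε x y) (v : (M.dsum N).V x) :
    (M.dsum N).arrowMap α v = (M.arrowMap α v.1, N.arrowMap α v.2) := by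
  cases α <;> rfl

/-- The endomorphism of `M ⊕ N` projecting onto `M` along `N`. -/
def ARep.projFst (M N : ARep k n ε) : (M.dsum N).Hom (M.dsum N) :=
  .ofComm (fun x => (LinearMap.inl k (M.V x) (N.V x)).comp (LinearMap.fst k (M.V x) (N.V x)))
    fun α v => by
      simp only [ARep.arrowMap_dsum]
      exact Prod.ext rfl (map_zero (N.arrowMap α)).symm

/-- The morphism `M ⊕ N → E` with components `f` and `g`. -/
def ARep.Hom.coprod {M N E : ARep k n ε} (f : M.Hom E) (g : N.Hom E) : (M.dsum N).Hom E :=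
  .ofComm (fun x => (f.app x).coprod (g.app x)) fun α v => by
    rw [ARep.arrowMap_dsum]
    exact (congrArg₂ (· + ·) (f.comm α v.1) (g.comm α v.2)).trans (map_add _ _ _).symm

theorem ARep.Hom.exists_rightInverse {M N : ARep k n ε} (f : M.Hom N)
    (hf : ∀ x, Function.Bijective (f.app x)) :
    ∃ g : N.Hom M, ∀ x, Function.RightInverse (g.app x) (f.app x) := by
  let e (x : ℕ) : M.V x ≃ₗ[k] N.V x := .ofBijective (f.app x) (hf x)
  have apply_symm (x : ℕ) (v : N.V x) : f.app x ((e x).symm v) = v := (e x).apply_symm_apply v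
  refine ⟨.ofComm (fun x => (e x).symm) fun {x y} α v => (hf y).1 ?_, apply_symm⟩
  simp only [LinearEquiv.coe_coe, f.comm, apply_symm]

theorem ARep.Iso.symm {M N : ARep k n ε} (h : M.Iso N) : N.Iso M := by
  obtain ⟨f, hf⟩ := h
  obtain ⟨g, hg⟩ := f.exists_rightInverse hf
  exact ⟨g, fun x => ⟨(hg x).injective, (hg x).rightInverse_of_injective (hf x).1 |>.surjective⟩⟩

theorem ARep.Iso.trans {M N P : ARep k n ε} (h : M.Iso N) (h' : N.Iso P) : M.Iso P := by
  obtain ⟨f, hf⟩ := h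
  obtain ⟨g, hg⟩ := h'
  exact ⟨g.comp f, fun x => (hg x).comp (hf x)⟩

theorem ARep.Iso.dsum_of_isZero_right (M : ARep k n ε) {Z : ARep k n ε} (hZ : Z.IsZero) :
    M.Iso (M.dsum Z) := by
  refine ⟨.ofComm (fun x => LinearMap.inl k (M.V x) (Z.V x)) fun α v => ?_, fun x => ?_⟩
  · rw [ARep.arrowMap_dsum]
    exact Prod.ext rfl (hZ _ _).symm
  · exact ⟨LinearMap.inl_injective, fun v => ⟨v.1, Prod.ext rfl (hZ x v.2).symm⟩⟩

theorem ARep.Iso.dsum_of_isZero_left (M : ARep k n ε) {Z : ARep k n ε} (hZ : Z.IsZero) :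
    M.Iso (Z.dsum M) := by
  refine ⟨.ofComm (fun x => LinearMap.inr k (Z.V x) (M.V x)) fun α v => ?_, fun x => ?_⟩
  · rw [ARep.arrowMap_dsum]
    exact Prod.ext (hZ _ _).symm rfl
  · exact ⟨LinearMap.inr_injective, fun v => ⟨v.2, Prod.ext (hZ x v.1).symm rfl⟩⟩

theorem ARep.Indec.of_iso {M N : ARep k n ε} (hM : M.Indec) (h : M.Iso N) : N.Indec := by
  refine ⟨fun hN => hM.1 fun x v => ?_, fun A B hAB => hM.2 A B (h.trans hAB)⟩
  obtain ⟨f, hf⟩ := h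
  exact (hf x).1 ((hN x _).trans (hN x _).symm)

theorem ARep.iso_dsum_of_range_sup_range_eq_top {E M N : ARep k n ε} (f : M.Hom E) (g : N.Hom E)
    (hrange : ∀ x, LinearMap.range (f.app x) ⊔ LinearMap.range (g.app x) = ⊤)
    (hdim : ∀ x, Module.finrank k (E.V x) =
      Module.finrank k (M.V x) + Module.finrank k (N.V x)) :
    E.Iso (M.dsum N) := by
  refine ARep.Iso.symm ⟨f.coprod g, fun x => ?_⟩
  have surj : Function.Surjective ((f.app x).coprod (g.app x)) := by
    rw [← LinearMap.range_eq_top, LinearMap.range_coprod, hrange x]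
  have dim_eq : Module.finrank k (M.V x × N.V x) = Module.finrank k (E.V x) := by
    rw [hdim x, Module.finrank_prod]
  exact ⟨(LinearMap.injective_iff_surjective_of_finrank_eq_finrank dim_eq).2 surj, surj⟩

theorem SES.splits_of_section {B A : ARep k n ε} (σ : SES B A) (s : A.Hom σ.E)
    (hs : ∀ x v, σ.π.app x (s.app x v) = v) : σ.Splits := by
  have exists_retract (x : ℕ) : ∃ r : σ.E.V x →ₗ[k] B.V x,
      ∀ v, σ.ι.app x (r v) = v - s.app x (σ.π.app x v) := by
    let e := LinearEquiv.ofInjective (σ.ι.app x) (σ.inj x)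
    let q : σ.E.V x →ₗ[k] σ.E.V x := LinearMap.id - s.app x ∘ₗ σ.π.app x
    have hq (v : σ.E.V x) : q v ∈ LinearMap.range (σ.ι.app x) :=
      (σ.exct x _).1 (by simp [q, hs])
    refine ⟨e.symm ∘ₗ q.codRestrict _ hq, fun v => ?_⟩
    exact congrArg Subtype.val (e.apply_symm_apply ⟨q v, hq v⟩)
  choose r hr using exists_retract
  refine ⟨.ofComm r fun {x y} α v => σ.inj y ?_, fun x v => σ.inj x ?_⟩
  · rw [σ.ι.comm, hr, hr, map_sub, σ.π.comm, s.comm]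
  · exact (hr x _).trans (by rw [(σ.exct x _).2 ⟨v, rfl⟩, map_zero, sub_zero])

theorem SES.finrank_middle {B A : ARep k n ε} (σ : SES B A) (x : ℕ) :
    Module.finrank k (σ.E.V x) = Module.finrank k (B.V x) + Module.finrank k (A.V x) := by
  have ker_eq : LinearMap.ker (σ.π.app x) = LinearMap.range (σ.ι.app x) :=
    Submodule.ext (σ.exct x)
  rw [← (σ.π.app x).finrank_range_add_finrank_ker, ker_eq,
    LinearMap.range_eq_top.2 (σ.surj x), finrank_top,
    LinearMap.finrank_range_of_inj (σ.inj x), add_comm]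

end Representations

section Intervals

variable {k : Type} [Field k] {n : ℕ} {ε : ℕ → Bool} {i j x y : ℕ}

/-- The coordinate on the space of `M(i, j)` at `x`. -/
def coord (k : Type) [Field k] (n : ℕ) (ε : ℕ → Bool) (i j x : ℕ) :
    (intervalRep k n ε i j).V x →ₗ[k] k :=
  (fiber k (SuppCond n i j x)).subtype

/-- The generator of the space of `M(i, j)` at `x`, equal to `0` when `x` is not in the support. -/
def gen (k : Type) [Field k] (n : ℕ) (ε : ℕ → Bool) (i j x : ℕ) :
    (intervalRep k n ε i j).V x :=
  (⟨if SuppCond n i j x then 1 else 0, by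
    unfold fiber
    split_ifs
    exacts [Submodule.mem_top, Submodule.zero_mem _]⟩ : fiber k (SuppCond n i j x))

theorem coord_injective : Function.Injective (coord k n ε i j x) :=
  Subtype.val_injective

theorem coord_gen (h : SuppCond n i j x) : coord k n ε i j x (gen k n ε i j x) = 1 :=
  if_pos h

theorem gen_ne_zero (h : SuppCond n i j x) : gen k n ε i j x ≠ 0 := fun h0 =>
  one_ne_zero ((coord_gen (k := k) (ε := ε) h).symm.trans (by rw [h0, map_zero]))

theorem finrank_intervalRep :
    Module.finrank k ((intervalRep k n ε i j).V x) = if SuppCond n i j x then 1 else 0 := by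
  change Module.finrank k (fiber k (SuppCond n i j x)) = _
  unfold fiber
  by_cases h : SuppCond n i j x
  · rw [if_pos h, if_pos h, finrank_top, Module.finrank_self]
  · rw [if_neg h, if_neg h, finrank_bot]

theorem intervalRep_eq_zero (h : ¬SuppCond n i j x) (v : (intervalRep k n ε i j).V x) : v = 0 :=
  finrank_zero_iff_forall_zero.1 (by rw [finrank_intervalRep, if_neg h]) v

theorem coord_smul_gen (v : (intervalRep k n ε i j).V x) :
    coord k n ε i j x v • gen k n ε i j x = v := by
  by_cases h : SuppCond n i j x
  · exact coord_injective (by rw [map_smul, coord_gen h, smul_eq_mul, mul_one])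
  · rw [intervalRep_eq_zero h v, map_zero, zero_smul]

theorem coord_arrowMap (α : Arrow ε x y) (hx : SuppCond n i j x) (hy : SuppCond n i j y)
    (v : (intervalRep k n ε i j).V x) :
    coord k n ε i j y ((intervalRep k n ε i j).arrowMap α v) = coord k n ε i j x v := by
  cases α with
  | fwd _ h => simp only [ARep.arrowMap, intervalRep, fiberMap, h, hx, hy]; rfl
  | bwd _ h => simp only [ARep.arrowMap, intervalRep, fiberMap, h, hx, hy]; rfl

theorem intervalRep_isZero (h : j < i) : (intervalRep k n ε i j).IsZero := fun x v =>
  intervalRep_eq_zero (by unfold SuppCond; omega) v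

theorem intervalRep_not_isZero (hi : 1 ≤ i) (hij : i ≤ j) (hj : j ≤ n + 2) :
    ¬(intervalRep k n ε i j).IsZero := fun h =>
  gen_ne_zero (k := k) (ε := ε) (x := i) ⟨le_rfl, hij, hi, hij.trans hj⟩ (h i _)

/-- `w` is the family of images of the generators under a morphism `M(i, j) → E`. -/
structure IsIntervalFamily (E : ARep k n ε) (i j : ℕ) (w : ∀ x, E.V x) : Prop where
  eq_zero : ∀ {x : ℕ}, ¬SuppCond n i j x → w x = 0
  arrowMap : ∀ {x y : ℕ} (α : Arrow ε x y), SuppCond n i j x → E.arrowMap α (w x) = w y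

theorem isIntervalFamily_gen :
    IsIntervalFamily (intervalRep k n ε i j) i j (gen k n ε i j) where
  eq_zero h := intervalRep_eq_zero h _
  arrowMap {x y} α hx := by
    by_cases hy : SuppCond n i j y
    · exact coord_injective (by rw [coord_arrowMap α hx hy, coord_gen hx, coord_gen hy])
    · exact (intervalRep_eq_zero hy _).trans (intervalRep_eq_zero hy _).symm

namespace IsIntervalFamily

variable {E F : ARep k n ε} {w : ∀ x, E.V x}

theorem map (hw : IsIntervalFamily E i j w) (f : E.Hom F) :
    IsIntervalFamily F i j fun x => f.app x (w x) where
  eq_zero h := by rw [hw.eq_zero h, map_zero]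
  arrowMap α hx := by rw [← f.comm, hw.arrowMap α hx]

/-- The morphism `M(i, j) → E` sending the generators to `w`. -/
def hom (hw : IsIntervalFamily E i j w) : (intervalRep k n ε i j).Hom E :=
  .ofComm (fun x => (coord k n ε i j x).smulRight (w x)) fun {x y} α v => by
    simp only [LinearMap.smulRight_apply, map_smul]
    by_cases hx : SuppCond n i j x
    · by_cases hy : SuppCond n i j y
      · rw [coord_arrowMap α hx hy, hw.arrowMap α hx]
      · rw [hw.arrowMap α hx, hw.eq_zero hy, smul_zero, smul_zero]
    · simp [intervalRep_eq_zero hx v]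

theorem hom_app (hw : IsIntervalFamily E i j w) (v : (intervalRep k n ε i j).V x) :
    hw.hom.app x v = coord k n ε i j x v • w x := rfl

theorem mem_range_hom (hw : IsIntervalFamily E i j w) (x : ℕ) :
    w x ∈ LinearMap.range (hw.hom.app x) := by
  by_cases hx : SuppCond n i j x
  · exact ⟨gen k n ε i j x, by rw [hom_app, coord_gen hx, one_smul]⟩
  · exact hw.eq_zero hx ▸ Submodule.zero_mem _

end IsIntervalFamily

theorem exists_smul_of_hom_intervalRep
    (f : (intervalRep k n ε i j).Hom (intervalRep k n ε i j)) :
    ∃ t : k, ∀ x v, f.app x v = t • v := by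
  let t (x : ℕ) : k := coord k n ε i j x (f.app x (gen k n ε i j x))
  have t_eq_of_arrow {x y : ℕ} (α : Arrow ε x y) (hx : SuppCond n i j x)
      (hy : SuppCond n i j y) : t x = t y := by
    have := coord_arrowMap α hx hy (f.app x (gen k n ε i j x))
    rw [← f.comm, isIntervalFamily_gen.arrowMap α hx] at this
    exact this.symm
  have t_eq {x : ℕ} (hx : max i 1 ≤ x) : SuppCond n i j x → t x = t (max i 1) := by
    induction x, hx using Nat.le_induction with
    | base => exact fun _ => rfl
    | succ x hx ih =>
      intro hx'
      have hx'' : SuppCond n i j x := by unfold SuppCond at *; omega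
      rw [← ih hx'']
      refine (Arrow.eq_succ_of_forall_eq (ε := ε) fun y z α hyz => t_eq_of_arrow α ?_ ?_).symm <;>
        rcases α.adjacent with ⟨rfl, -⟩ | ⟨rfl, -⟩ <;> simp_all
  refine ⟨t (max i 1), fun x v => ?_⟩
  by_cases hx : SuppCond n i j x
  · apply coord_injective
    rw [← t_eq (max_le hx.1 hx.2.2.1) hx, map_smul, smul_eq_mul, mul_comm, ← smul_eq_mul,
      ← map_smul, ← map_smul, coord_smul_gen]
  · rw [intervalRep_eq_zero hx v, map_zero, smul_zero]

theorem intervalRep_indec (hi : 1 ≤ i) (hij : i ≤ j) (hj : j ≤ n + 2) :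
    (intervalRep k n ε i j).Indec := by
  refine ⟨intervalRep_not_isZero hi hij hj, fun A B h => ?_⟩
  obtain ⟨f, hf⟩ := h
  obtain ⟨g, hfg⟩ := f.exists_rightInverse hf
  obtain ⟨t, ht⟩ := exists_smul_of_hom_intervalRep (g.comp ((A.projFst B).comp f))
  have projFst_eq (x : ℕ) (w : (A.dsum B).V x) : (A.projFst B).app x w = t • w := by
    have := congrArg (f.app x) (ht x (g.app x w))
    simp only [ARep.Hom.comp, LinearMap.comp_apply, map_smul] at this
    rwa [hfg x, hfg x] at this
  have fst_eq (x : ℕ) (u : A.V x) (v : B.V x) : (u, 0) = t • (u, v) := projFst_eq x (u, v)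
  by_cases t_zero : t = 0
  · refine Or.inl fun x u => ?_
    exact (congrArg Prod.fst (fst_eq x u 0)).trans (t_zero ▸ zero_smul k u)
  · refine Or.inr fun x v => (smul_eq_zero_iff_right t_zero).1 ?_
    exact (congrArg Prod.snd (fst_eq x 0 v)).symm

end Intervals

section Extensions

variable {k : Type} [Field k] {n : ℕ} {ε : ℕ → Bool} {a b c d x : ℕ}
  {σ : SES (intervalRep k n ε (a + 1) b) (intervalRep k n ε (c + 1) d)}

/-- The image in `E` of the generator of `M₁` at `x`. -/
def SES.subGen (σ : SES (intervalRep k n ε (a + 1) b) (intervalRep k n ε (c + 1) d)) (x : ℕ) :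
    σ.E.V x :=
  σ.ι.app x (gen k n ε (a + 1) b x)

theorem SES.isIntervalFamily_subGen : IsIntervalFamily σ.E (a + 1) b σ.subGen :=
  isIntervalFamily_gen.map σ.ι

theorem SES.exists_smul_subGen {v : σ.E.V x} (hv : σ.π.app x v = 0) :
    ∃ s : k, v = s • σ.subGen x := by
  obtain ⟨u, rfl⟩ := (σ.exct x v).1 hv
  exact ⟨coord k n ε (a + 1) b x u, by rw [SES.subGen, ← map_smul, coord_smul_gen]⟩

/-- Lifts to `E` of the generators of `M₂`, together with a function on the vertices whose
differences are the coordinates, with respect to `subGen`, of the failure of these lifts to be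
compatible with the structure maps. -/
structure SES.PotentialLift
    (σ : SES (intervalRep k n ε (a + 1) b) (intervalRep k n ε (c + 1) d)) where
  lift : ∀ x, σ.E.V x
  pot : ℕ → k
  lift_eq_zero : ∀ {x : ℕ}, ¬SuppCond n (c + 1) d x → lift x = 0
  π_lift : ∀ x, σ.π.app x (lift x) = gen k n ε (c + 1) d x
  arrowMap_lift : ∀ {x y : ℕ} (α : Arrow ε x y), SuppCond n (c + 1) d x →
    σ.E.arrowMap α (lift x) = lift y + (pot y - pot x) • σ.subGen y
  pot_eq : ∀ {x y : ℕ}, Arrow ε x y → ¬(SuppCond n (c + 1) d x ∧ SuppCond n (a + 1) b y) →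
    pot x = pot y

theorem SES.nonempty_potentialLift
    (σ : SES (intervalRep k n ε (a + 1) b) (intervalRep k n ε (c + 1) d)) :
    Nonempty σ.PotentialLift := by
  have exists_lift (x : ℕ) : ∃ v, σ.π.app x v = gen k n ε (c + 1) d x ∧
      (¬SuppCond n (c + 1) d x → v = 0) := by
    by_cases hx : SuppCond n (c + 1) d x
    · obtain ⟨v, hv⟩ := σ.surj x (gen k n ε (c + 1) d x)
      exact ⟨v, hv, fun h => (h hx).elim⟩
    · exact ⟨0, (map_zero _).trans (intervalRep_eq_zero hx _).symm, fun _ => rfl⟩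
  choose lift π_lift lift_eq_zero using exists_lift
  have exists_defect {x y : ℕ} (α : Arrow ε x y) :
      ∃ s : k, (SuppCond n (c + 1) d x → σ.E.arrowMap α (lift x) = lift y + s • σ.subGen y) ∧
        (¬(SuppCond n (c + 1) d x ∧ SuppCond n (a + 1) b y) → s = 0) := by
    by_cases hx : SuppCond n (c + 1) d x
    · have π_defect : σ.π.app y (σ.E.arrowMap α (lift x) - lift y) = 0 := by
        rw [map_sub, σ.π.comm, π_lift, π_lift, isIntervalFamily_gen.arrowMap α hx, sub_self]
      obtain ⟨s, hs⟩ := SES.exists_smul_subGen π_defect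
      by_cases hy : SuppCond n (a + 1) b y
      · exact ⟨s, fun _ => eq_add_of_sub_eq' hs, fun h => (h ⟨hx, hy⟩).elim⟩
      · rw [σ.isIntervalFamily_subGen.eq_zero hy, smul_zero] at hs
        exact ⟨0, fun _ => by rw [zero_smul, add_zero, sub_eq_zero.1 hs], fun _ => rfl⟩
    · exact ⟨0, fun h => (hx h).elim, fun _ => rfl⟩
  choose η arrowMap_lift η_eq_zero using @exists_defect
  obtain ⟨pot, hpot⟩ := Arrow.exists_potential η
  refine ⟨⟨lift, pot, lift_eq_zero _, π_lift, fun α hx => ?_, fun α h => ?_⟩⟩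
  · rw [arrowMap_lift α hx, hpot α, add_sub_cancel_left]
  · rw [hpot α, η_eq_zero α h, add_zero]

namespace SES.PotentialLift

variable (t : σ.PotentialLift)

/-- A potential is determined up to an additive constant, which can thus be prescribed. -/
def shift (s : k) : σ.PotentialLift where
  lift := t.lift
  pot x := t.pot x + s
  lift_eq_zero := t.lift_eq_zero
  π_lift := t.π_lift
  arrowMap_lift α hx := by rw [t.arrowMap_lift α hx, add_sub_add_right_eq_sub]
  pot_eq α h := by rw [t.pot_eq α h]

theorem pot_eq_left (hx : x ≤ max a c) : t.pot x = t.pot (max a c) := by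
  refine Nat.decreasingInduction (motive := fun y _ => t.pot y = t.pot (max a c))
    (fun l hl ih => ih ▸ Arrow.eq_succ_of_forall_eq (ε := ε) fun y z α hyz => ?_) rfl hx
  have := α.adjacent
  exact t.pot_eq α (by unfold SuppCond; omega)

theorem pot_eq_right (hx : min b d + 1 ≤ x) : t.pot x = t.pot (min b d + 1) := by
  induction x, hx using Nat.le_induction with
  | base => rfl
  | succ l hl ih =>
    rw [← ih]
    refine (Arrow.eq_succ_of_forall_eq (ε := ε) fun y z α hyz => ?_).symm
    exact t.pot_eq α (by unfold SuppCond; omega)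

/-- The candidate for the images in `E` of the generators of `M(i + 1, j)`. -/
def strand (i j x : ℕ) : σ.E.V x :=
  if SuppCond n (i + 1) j x then t.lift x + t.pot x • σ.subGen x else 0

theorem strand_eq {i j : ℕ} (h : ¬SuppCond n (i + 1) j x →
      ¬SuppCond n (c + 1) d x ∧ (SuppCond n (a + 1) b x → t.pot x = 0)) :
    t.strand i j x = t.lift x + t.pot x • σ.subGen x := by
  by_cases hx : SuppCond n (i + 1) j x
  · exact if_pos hx
  obtain ⟨hx₂, pot_zero⟩ := h hx
  have smul_subGen : t.pot x • σ.subGen x = 0 := by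
    by_cases hx₁ : SuppCond n (a + 1) b x
    · rw [pot_zero hx₁, zero_smul]
    · rw [σ.isIntervalFamily_subGen.eq_zero hx₁, smul_zero]
  rw [strand, if_neg hx, t.lift_eq_zero hx₂, smul_subGen, add_zero]

theorem isIntervalFamily_strand {i j : ℕ}
    (lift_zero : ∀ {x y : ℕ}, Arrow ε x y → SuppCond n (i + 1) j x →
      ¬SuppCond n (c + 1) d x → SuppCond n (a + 1) b x ∧ ¬SuppCond n (c + 1) d y)
    (source : ∀ {x y : ℕ}, Arrow ε x y → SuppCond n (i + 1) j x → SuppCond n (c + 1) d x →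
      ¬SuppCond n (a + 1) b x → SuppCond n (a + 1) b y → t.pot x = 0)
    (target : ∀ {x y : ℕ}, Arrow ε x y → SuppCond n (i + 1) j x → ¬SuppCond n (i + 1) j y →
      ¬SuppCond n (c + 1) d y ∧ (SuppCond n (a + 1) b y → t.pot y = 0)) :
    IsIntervalFamily σ.E (i + 1) j (t.strand i j) where
  eq_zero h := if_neg h
  arrowMap {x y} α hx := by
    have hsub := σ.isIntervalFamily_subGen
    rw [strand_eq t (target α hx), strand, if_pos hx, map_add, map_smul]
    by_cases hx₂ : SuppCond n (c + 1) d x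
    · rw [t.arrowMap_lift α hx₂]
      by_cases hx₁ : SuppCond n (a + 1) b x
      · rw [hsub.arrowMap α hx₁]
        module
      · rw [hsub.eq_zero hx₁, map_zero, smul_zero, add_zero, sub_smul]
        by_cases hy₁ : SuppCond n (a + 1) b y
        · rw [source α hx hx₂ hx₁ hy₁, zero_smul, sub_zero]
        · rw [hsub.eq_zero hy₁, smul_zero, smul_zero, sub_zero]
    · obtain ⟨hx₁, hy₂⟩ := lift_zero α hx hx₂
      rw [t.lift_eq_zero hx₂, t.lift_eq_zero hy₂, map_zero, hsub.arrowMap α hx₁,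
        t.pot_eq α fun h => hx₂ h.1]

end SES.PotentialLift

/-- The supports of `M₁ = M(a + 1, b)` and `M₂ = M(c + 1, d)` overlap or are adjacent, and at the
left end of the overlap there is an arrow from the support of `M₂` to that of `M₁`. -/
def LinkedLeft (ε : ℕ → Bool) (a b c d : ℕ) : Prop :=
  max a c ≤ min b d ∧ ((a < c ∧ ε c = false) ∨ (c < a ∧ ε a = true))

/-- The supports of `M₁ = M(a + 1, b)` and `M₂ = M(c + 1, d)` overlap or are adjacent, and at the
right end of the overlap there is an arrow from the support of `M₂` to that of `M₁`. -/
def LinkedRight (ε : ℕ → Bool) (a b c d : ℕ) : Prop :=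
  max a c ≤ min b d ∧ ((b < d ∧ ε b = false) ∨ (d < b ∧ ε d = true))

theorem linked_of_arrow {x y z : ℕ} (α : Arrow ε x y) (hx : SuppCond n (c + 1) d x)
    (hy : SuppCond n (a + 1) b y) (hz : z = x ∨ z = y)
    (hz' : ¬(SuppCond n (a + 1) b z ∧ SuppCond n (c + 1) d z)) :
    (z ≤ max a c ∧ LinkedLeft ε a b c d) ∨ (min b d + 1 ≤ z ∧ LinkedRight ε a b c d) := by
  unfold SuppCond LinkedLeft LinkedRight at *
  rcases α.adjacent with ⟨rfl, h⟩ | ⟨rfl, h⟩ <;> rcases hz with rfl | rfl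
  · obtain rfl : z = a := by omega
    exact .inl (by grind)
  · obtain rfl : x = d := by omega
    exact .inr (by grind)
  · obtain rfl : y = b := by omega
    exact .inr (by grind)
  · obtain rfl : z = c := by omega
    exact .inl (by grind)

theorem suppCond_of_linked {x y : ℕ} (hL : LinkedLeft ε a b c d) (hR : LinkedRight ε a b c d)
    (α : Arrow ε x y) (hx : SuppCond n (a + 1) b x) (hy : SuppCond n (c + 1) d y) :
    SuppCond n (c + 1) d x ∧ SuppCond n (a + 1) b y := by
  have := α.adjacent
  unfold SuppCond LinkedLeft LinkedRight at *
  grind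

namespace SES.PotentialLift

variable (t : σ.PotentialLift)

theorem splits (hleft : LinkedLeft ε a b c d → t.pot (max a c) = 0)
    (hright : LinkedRight ε a b c d → t.pot (min b d + 1) = 0) : σ.Splits := by
  have pot_eq_zero {x y z : ℕ} (α : Arrow ε x y) (hx : SuppCond n (c + 1) d x)
      (hy : SuppCond n (a + 1) b y) (hz : z = x ∨ z = y)
      (hz' : ¬(SuppCond n (a + 1) b z ∧ SuppCond n (c + 1) d z)) : t.pot z = 0 := by
    rcases linked_of_arrow α hx hy hz hz' with ⟨hz, h⟩ | ⟨hz, h⟩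
    · rw [t.pot_eq_left hz, hleft h]
    · rw [t.pot_eq_right hz, hright h]
  have hw : IsIntervalFamily σ.E (c + 1) d (t.strand c d) :=
    t.isIntervalFamily_strand (fun _ hx hx' => (hx' hx).elim)
      (fun α _ hx₂ hx₁ hy => pot_eq_zero α hx₂ hy (.inl rfl) fun h => hx₁ h.1)
      (fun α hx hy => ⟨hy, fun hy₁ => pot_eq_zero α hx hy₁ (.inr rfl) fun h => hy h.2⟩)
  refine σ.splits_of_section hw.hom fun x v => ?_
  have π_strand : σ.π.app x (t.strand c d x) = gen k n ε (c + 1) d x := by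
    by_cases hx : SuppCond n (c + 1) d x
    · have π_subGen : σ.π.app x (σ.subGen x) = 0 := (σ.exct x _).2 ⟨_, rfl⟩
      rw [strand, if_pos hx, map_add, map_smul, π_subGen, smul_zero, add_zero, t.π_lift]
    · rw [hw.eq_zero hx, map_zero, intervalRep_eq_zero hx (gen k n ε (c + 1) d x)]
  rw [hw.hom_app, map_smul, π_strand, coord_smul_gen]

theorem isIntervalFamily_strand_left (hR : LinkedRight ε a b c d)
    (ht : t.pot (max a c) = 0) : IsIntervalFamily σ.E (c + 1) b (t.strand c b) := by
  have pot_eq_zero {x : ℕ} (hx : x ≤ max a c) : t.pot x = 0 := (t.pot_eq_left hx).trans ht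
  unfold LinkedRight at *
  refine t.isIntervalFamily_strand (fun α => ?_) (fun α => ?_) fun α => ?_ <;>
    have := α.adjacent <;> unfold SuppCond <;> grind

theorem isIntervalFamily_strand_right (hL : LinkedLeft ε a b c d)
    (ht : t.pot (min b d + 1) = 0) : IsIntervalFamily σ.E (a + 1) d (t.strand a d) := by
  have pot_eq_zero {x : ℕ} (hx : min b d + 1 ≤ x) : t.pot x = 0 := (t.pot_eq_right hx).trans ht
  unfold LinkedLeft at *
  refine t.isIntervalFamily_strand (fun α => ?_) (fun α => ?_) fun α => ?_ <;>
    have := α.adjacent <;> unfold SuppCond <;> grind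

theorem strand_left_eq (ht : t.pot (max a c) = 0) (hx : x ≤ b) :
    t.strand c b x = t.lift x + t.pot x • σ.subGen x := by
  refine t.strand_eq fun hx' => ⟨by unfold SuppCond at *; omega, fun hx₁ => ?_⟩
  exact (t.pot_eq_left (by unfold SuppCond at *; omega)).trans ht

theorem strand_right_eq (ht : t.pot (min b d + 1) = 0) (hx : a < x) :
    t.strand a d x = t.lift x + t.pot x • σ.subGen x := by
  refine t.strand_eq fun hx' => ⟨by unfold SuppCond at *; omega, fun hx₁ => ?_⟩
  exact (t.pot_eq_right (by unfold SuppCond at *; omega)).trans ht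

theorem eq_top_of_mem {R : Submodule k (σ.E.V x)} (hlift : t.lift x ∈ R)
    (hsub : σ.subGen x ∈ R) : R = ⊤ := by
  refine eq_top_iff.2 fun v _ => ?_
  let s : k := coord k n ε (c + 1) d x (σ.π.app x v)
  have π_sub : σ.π.app x (v - s • t.lift x) = 0 := by
    rw [map_sub, map_smul, t.π_lift, coord_smul_gen, sub_self]
  obtain ⟨s', hs'⟩ := SES.exists_smul_subGen π_sub
  rw [sub_eq_iff_eq_add.1 hs']
  exact R.add_mem (R.smul_mem _ hsub) (R.smul_mem _ hlift)

end SES.PotentialLift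

theorem SES.linkedRight_of_not_splits (hσ : ¬σ.Splits) : LinkedRight ε a b c d := by
  obtain ⟨t⟩ := σ.nonempty_potentialLift
  by_contra hR
  exact hσ ((t.shift (-t.pot (max a c))).splits (fun _ => add_neg_cancel _) fun h => (hR h).elim)

theorem SES.linkedLeft_of_not_splits (hσ : ¬σ.Splits) : LinkedLeft ε a b c d := by
  obtain ⟨t⟩ := σ.nonempty_potentialLift
  by_contra hL
  exact hσ ((t.shift (-t.pot (min b d + 1))).splits (fun h => (hL h).elim)
    fun _ => add_neg_cancel _)

theorem SES.exists_potentialLift_of_not_splits (hσ : ¬σ.Splits) :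
    ∃ t : σ.PotentialLift, t.pot (max a c) = 0 ∧ t.pot (min b d + 1) ≠ 0 := by
  obtain ⟨t⟩ := σ.nonempty_potentialLift
  have left_zero : (t.shift (-t.pot (max a c))).pot (max a c) = 0 := add_neg_cancel _
  exact ⟨_, left_zero, fun h => hσ (PotentialLift.splits _ (fun _ => left_zero) fun _ => h)⟩

theorem SES.iso_dsum_of_not_splits (hσ : ¬σ.Splits) :
    σ.E.Iso ((intervalRep k n ε (c + 1) b).dsum (intervalRep k n ε (a + 1) d)) := by
  have hL := σ.linkedLeft_of_not_splits hσ
  have hR := σ.linkedRight_of_not_splits hσ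
  obtain ⟨t, left_zero, right_ne_zero⟩ := σ.exists_potentialLift_of_not_splits hσ
  set τ := t.pot (min b d + 1)
  have right_zero : (t.shift (-τ)).pot (min b d + 1) = 0 := add_neg_cancel _
  have hw := t.isIntervalFamily_strand_left hR left_zero
  have hz := (t.shift (-τ)).isIntervalFamily_strand_right hL right_zero
  refine ARep.iso_dsum_of_range_sup_range_eq_top hw.hom hz.hom (fun x => ?_) fun x => ?_
  · set R := LinearMap.range (hw.hom.app x) ⊔ LinearMap.range (hz.hom.app x)
    have mem_left (hx : x ≤ b) : t.lift x + t.pot x • σ.subGen x ∈ R :=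
      t.strand_left_eq left_zero hx ▸ Submodule.mem_sup_left (hw.mem_range_hom x)
    have mem_right (hx : a < x) : t.lift x + (t.pot x + -τ) • σ.subGen x ∈ R :=
      (t.shift (-τ)).strand_right_eq right_zero hx ▸ Submodule.mem_sup_right (hz.mem_range_hom x)
    have subGen_mem : σ.subGen x ∈ R := by
      by_cases hx : SuppCond n (a + 1) b x
      · have := R.sub_mem (mem_left hx.2.1) (mem_right hx.1)
        rw [add_sub_add_left_eq_sub, ← sub_smul, sub_add_cancel_left, neg_neg] at this
        exact (R.smul_mem_iff right_ne_zero).1 this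
      · exact (σ.isIntervalFamily_subGen.eq_zero hx).symm ▸ R.zero_mem
    refine t.eq_top_of_mem ?_ subGen_mem
    obtain hx | hx : x ≤ b ∨ a < x := by have := hL.1; omega
    · exact (R.add_mem_iff_left (R.smul_mem _ subGen_mem)).1 (mem_left hx)
    · exact (R.add_mem_iff_left (R.smul_mem _ subGen_mem)).1 (mem_right hx)
  · rw [σ.finrank_middle]
    simp only [finrank_intervalRep]
    unfold LinkedLeft LinkedRight SuppCond at *
    grind

theorem exists_hom_ne_zero_of_linked (hL : LinkedLeft ε a b c d) (hR : LinkedRight ε a b c d)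
    (h : max a c < min b d) (hn : min b d ≤ n + 2) :
    ∃ f : (intervalRep k n ε (a + 1) b).Hom (intervalRep k n ε (c + 1) d),
      ∃ x v, f.app x v ≠ 0 := by
  let w (x : ℕ) : (intervalRep k n ε (c + 1) d).V x :=
    if SuppCond n (a + 1) b x then gen k n ε (c + 1) d x else 0
  have hw : IsIntervalFamily (intervalRep k n ε (c + 1) d) (a + 1) b w :=
    { eq_zero := fun hx => if_neg hx
      arrowMap := fun {x y} α hx => by
        have gen_y (hy : ¬(SuppCond n (c + 1) d x ∧ SuppCond n (a + 1) b y)) :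
            gen k n ε (c + 1) d y = 0 :=
          intervalRep_eq_zero (fun hy' => hy (suppCond_of_linked hL hR α hx hy')) _
        have w_y : w y = gen k n ε (c + 1) d y := by
          by_cases hy : SuppCond n (a + 1) b y
          · exact if_pos hy
          · exact (if_neg hy).trans (gen_y fun h => hy h.2).symm
        rw [w_y, show w x = gen k n ε (c + 1) d x from if_pos hx]
        by_cases hx₂ : SuppCond n (c + 1) d x
        · exact isIntervalFamily_gen.arrowMap α hx₂
        · rw [gen_y fun h => hx₂ h.1, isIntervalFamily_gen.eq_zero hx₂, map_zero] }
  have h₁ : SuppCond n (a + 1) b (max a c + 1) := by unfold SuppCond; omega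
  have h₂ : SuppCond n (c + 1) d (max a c + 1) := by unfold SuppCond; omega
  refine ⟨hw.hom, max a c + 1, gen k n ε (a + 1) b _, ?_⟩
  rw [hw.hom_app, coord_gen h₁, one_smul, show w _ = gen k n ε (c + 1) d _ from if_pos h₁]
  exact gen_ne_zero h₂

theorem max_lt_min_of_hom_ne_zero
    {f : (intervalRep k n ε (a + 1) b).Hom (intervalRep k n ε (c + 1) d)}
    {v : (intervalRep k n ε (a + 1) b).V x} (hv : f.app x v ≠ 0) : max a c < min b d := by
  have h₁ : SuppCond n (a + 1) b x := by
    by_contra hx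
    exact hv (by rw [intervalRep_eq_zero hx v, map_zero])
  have h₂ : SuppCond n (c + 1) d x := by
    by_contra hx
    exact hv (intervalRep_eq_zero hx _)
  unfold SuppCond at *
  omega

theorem SES.exists_decomposition_iff (hσ : ¬σ.Splits) (hab : a < b) (hb : b ≤ n + 2)
    (hcd : c < d) (hd : d ≤ n + 2) :
    (∃ A B : ARep k n ε, ¬A.IsZero ∧ ¬B.IsZero ∧ σ.E.Iso (A.dsum B)) ↔ max a c < min b d := by
  have iso := σ.iso_dsum_of_not_splits hσ
  have max_le_min := (σ.linkedLeft_of_not_splits hσ).1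
  refine ⟨?_, fun h => ⟨_, _, intervalRep_not_isZero ?_ ?_ ?_, intervalRep_not_isZero ?_ ?_ ?_,
    iso⟩⟩
  · rintro ⟨A, B, hA, hB, hAB⟩
    by_contra h
    have indec : σ.E.Indec := by
      obtain hbc | hda : b ≤ c ∨ d ≤ a := by omega
      · exact (intervalRep_indec (by omega) (by omega) hd).of_iso
          ((ARep.Iso.dsum_of_isZero_left _ (intervalRep_isZero (by omega))).trans iso.symm)
      · exact (intervalRep_indec (by omega) (by omega) hb).of_iso
          ((ARep.Iso.dsum_of_isZero_right _ (intervalRep_isZero (by omega))).trans iso.symm)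
    exact (indec.2 A B hAB).elim hA hB
  all_goals omega

end Extensions

section Geometry

theorem ordConnected_vertical_slice {C : Set ℂ} (hC : Convex ℝ C) (x : ℝ) :
    {y : ℝ | (⟨x, y⟩ : ℂ) ∈ C}.OrdConnected := by
  have lineMap_eq (y : ℝ) : AffineMap.lineMap (⟨x, 0⟩ : ℂ) ⟨x, 1⟩ y = (⟨x, y⟩ : ℂ) := by
    apply Complex.ext <;> simp [AffineMap.lineMap_apply]
  simpa only [Set.preimage, lineMap_eq] using
    (hC.affine_preimage (AffineMap.lineMap (⟨x, 0⟩ : ℂ) ⟨x, 1⟩)).ordConnected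

variable {n : ℕ} {ε : ℕ → Bool} {p : ℕ → ℂ} {a b c d : ℕ}

/-- The height at abscissa `x` of the line through the endpoints of the segment `γ(e.1, e.2)`. -/
def lineAt (p : ℕ → ℂ) (e : ℕ × ℕ) (x : ℝ) : ℝ :=
  (p e.1).im + slope p e * (x - (p e.1).re)

theorem lineAt_left : lineAt p (a, b) (p a).re = (p a).im := by
  simp only [lineAt, sub_self, mul_zero, add_zero]

theorem lineAt_right (h : (p a).re < (p b).re) : lineAt p (a, b) (p b).re = (p b).im := by
  rw [lineAt, slope, div_mul_cancel₀ _ (sub_ne_zero.2 h.ne'), add_sub_cancel]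

theorem lineAt_sub (e : ℕ × ℕ) (x y : ℝ) :
    lineAt p e y - lineAt p e x = slope p e * (y - x) := by
  unfold lineAt
  ring

theorem continuous_lineAt (e : ℕ × ℕ) : Continuous (lineAt p e) := by
  unfold lineAt
  fun_prop

theorem mem_seg_iff (h : (p a).re < (p b).re) {z : ℂ} :
    z ∈ Seg p (a, b) ↔ z.re ∈ Set.Icc (p a).re (p b).re ∧ z.im = lineAt p (a, b) z.re := by
  have pos : 0 < (p b).re - (p a).re := sub_pos.2 h
  have ne : (p b).re - (p a).re ≠ 0 := pos.ne'
  have re_lineMap (t : ℝ) :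
      (AffineMap.lineMap (p a) (p b) t).re = (p a).re + t * ((p b).re - (p a).re) := by
    simp [AffineMap.lineMap_apply, add_comm]
  have im_lineMap (t : ℝ) :
      (AffineMap.lineMap (p a) (p b) t).im = (p a).im + t * ((p b).im - (p a).im) := by
    simp [AffineMap.lineMap_apply, add_comm]
  rw [Seg, segment_eq_image_lineMap]
  constructor
  · rintro ⟨t, ⟨ht₀, ht₁⟩, rfl⟩
    rw [re_lineMap, im_lineMap]
    refine ⟨⟨by nlinarith, by nlinarith⟩, ?_⟩
    simp only [lineAt, slope]
    field_simp
    ring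
  · rintro ⟨⟨hz₀, hz₁⟩, him⟩
    refine ⟨(z.re - (p a).re) / ((p b).re - (p a).re),
      ⟨div_nonneg (sub_nonneg.2 hz₀) pos.le, (div_le_one pos).2 (by linarith)⟩,
      Complex.ext ?_ ?_⟩
    · rw [re_lineMap, div_mul_cancel₀ _ ne, add_sub_cancel]
    · rw [im_lineMap, him, lineAt, slope, div_mul_comm, mul_comm]

theorem cross_and_slope_lt_of_lineAt_lt (hab : (p a).re < (p b).re) (hcd : (p c).re < (p d).re)
    {x y : ℝ} (hxy : x < y) (hx : max (p a).re (p c).re ≤ x) (hy : y ≤ min (p b).re (p d).re)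
    (lt_x : lineAt p (c, d) x < lineAt p (a, b) x) (lt_y : lineAt p (a, b) y < lineAt p (c, d) y) :
    Cross p (a, b) (c, d) ∧ slope p (a, b) < slope p (c, d) := by
  rw [max_le_iff] at hx
  rw [le_min_iff] at hy
  constructor
  · obtain ⟨s, ⟨hxs, hsy⟩, hs⟩ := intermediate_value_Ioo hxy.le
      ((continuous_lineAt (c, d)).sub (continuous_lineAt (a, b))).continuousOn
      ⟨sub_neg.2 lt_x, sub_pos.2 lt_y⟩
    refine ⟨⟨s, lineAt p (a, b) s⟩, (mem_seg_iff hab).2 ⟨⟨?_, ?_⟩, rfl⟩,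
      (mem_seg_iff hcd).2 ⟨⟨?_, ?_⟩, (sub_eq_zero.1 hs).symm⟩, ?_⟩
    · linarith
    · linarith
    · linarith
    · linarith
    · rintro ⟨h | h, -⟩ <;> have := congrArg Complex.re h <;> dsimp only at this <;> linarith
  · have h₁ := lineAt_sub (p := p) (a, b) x y
    have h₂ := lineAt_sub (p := p) (c, d) x y
    refine lt_of_mul_lt_mul_right ?_ (sub_pos.2 hxy).le
    linarith

namespace PolyPts

theorem strictMonoOn_re (hp : PolyPts n ε p) : StrictMonoOn (fun i => (p i).re) (Set.Iic (n + 2)) :=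
  fun a _ b hb hab => hp.1 a b hab hb

theorem lineAt_base (hp : PolyPts n ε p) (x : ℝ) : lineAt p (0, n + 2) x = (p 0).im := by
  simp only [lineAt, slope, hp.2.1, sub_self, zero_div, zero_mul, add_zero]

theorem lineAt_mem_convexHull (hp : PolyPts n ε p) {i j l : ℕ} (hij : i < j) (hjl : j < l)
    (hl : l ≤ n + 2) :
    (⟨(p j).re, lineAt p (i, l) (p j).re⟩ : ℂ) ∈
      convexHull ℝ (p '' {m | m ≤ n + 2 ∧ m ≠ j}) := by
  have mem_seg : (⟨(p j).re, lineAt p (i, l) (p j).re⟩ : ℂ) ∈ Seg p (i, l) :=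
    (mem_seg_iff (hp.1 i l (hij.trans hjl) hl)).2
      ⟨⟨(hp.1 i j hij (by omega)).le, (hp.1 j l hjl hl).le⟩, rfl⟩
  refine segment_subset_convexHull ?_ ?_ mem_seg
  · exact ⟨i, ⟨by omega, by omega⟩, rfl⟩
  · exact ⟨l, ⟨by omega, by omega⟩, rfl⟩

theorem im_notMem_uIcc_lineAt (hp : PolyPts n ε p) {i j l : ℕ} (hij : i < j) (hjl : j < l)
    (hl : l ≤ n + 2) : (p j).im ∉ Set.uIcc (p 0).im (lineAt p (i, l) (p j).re) := by
  intro h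
  have base_mem := hp.lineAt_mem_convexHull (i := 0) (j := j) (by omega) (by omega) le_rfl
  rw [hp.lineAt_base] at base_mem
  exact hp.2.2.2 j (by omega) ((ordConnected_vertical_slice (convex_convexHull ℝ _)
    (p j).re).uIcc_subset base_mem (hp.lineAt_mem_convexHull hij hjl hl) h)

theorem im_lt_lineAt (hp : PolyPts n ε p) {i j l : ℕ} (hij : i < j) (hjl : j < l)
    (hl : l ≤ n + 2) (hj : ε j = false) : (p j).im < lineAt p (i, l) (p j).re := by
  have lt_base : (p j).im < (p 0).im := (hp.2.2.1 j (by omega) (by omega)).2 hj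
  by_contra! h
  exact hp.im_notMem_uIcc_lineAt hij hjl hl (Set.mem_uIcc.2 (.inr ⟨h, lt_base.le⟩))

theorem lineAt_lt_im (hp : PolyPts n ε p) {i j l : ℕ} (hij : i < j) (hjl : j < l)
    (hl : l ≤ n + 2) (hj : ε j = true) : lineAt p (i, l) (p j).re < (p j).im := by
  have base_lt : (p 0).im < (p j).im := (hp.2.2.1 j (by omega) (by omega)).1 hj
  by_contra! h
  exact hp.im_notMem_uIcc_lineAt hij hjl hl (Set.mem_uIcc.2 (.inl ⟨base_lt.le, h⟩))

theorem lineAt_lt_of_linkedLeft (hp : PolyPts n ε p) (h : LinkedLeft ε a b c d)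
    (hlt : max a c < min b d) (hb : b ≤ n + 2) (hd : d ≤ n + 2) :
    lineAt p (c, d) (p (max a c)).re < lineAt p (a, b) (p (max a c)).re := by
  rcases h.2 with ⟨hac, hc⟩ | ⟨hca, ha⟩
  · rw [max_eq_right hac.le, lineAt_left]
    exact hp.im_lt_lineAt hac (by omega) hb hc
  · rw [max_eq_left hca.le, lineAt_left]
    exact hp.lineAt_lt_im hca (by omega) hd ha

theorem lineAt_lt_of_linkedRight (hp : PolyPts n ε p) (h : LinkedRight ε a b c d)
    (hlt : max a c < min b d) (hb : b ≤ n + 2) (hd : d ≤ n + 2) :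
    lineAt p (a, b) (p (min b d)).re < lineAt p (c, d) (p (min b d)).re := by
  rcases h.2 with ⟨hbd, hb'⟩ | ⟨hdb, hd'⟩
  · rw [min_eq_left hbd.le, lineAt_right (hp.1 a b (by omega) hb)]
    exact hp.im_lt_lineAt (by omega) hbd hd hb'
  · rw [min_eq_right hdb.le, lineAt_right (hp.1 c d (by omega) hd)]
    exact hp.lineAt_lt_im (by omega) hdb hb hd'

theorem cross_and_slope_lt_of_linked (hp : PolyPts n ε p) (hL : LinkedLeft ε a b c d)
    (hR : LinkedRight ε a b c d) (h : max a c < min b d) (hb : b ≤ n + 2) (hd : d ≤ n + 2) :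
    Cross p (a, b) (c, d) ∧ slope p (a, b) < slope p (c, d) := by
  have re_mono {i j : ℕ} (hij : i ≤ j) (hj : j ≤ n + 2) : (p i).re ≤ (p j).re :=
    hp.strictMonoOn_re.monotoneOn (hij.trans hj) hj hij
  refine cross_and_slope_lt_of_lineAt_lt (hp.1 a b (by omega) hb) (hp.1 c d (by omega) hd)
    (hp.1 _ _ h (by omega))
    (max_le (re_mono (le_max_left a c) (by omega)) (re_mono (le_max_right a c) (by omega)))
    (le_min (re_mono (min_le_left b d) hb) (re_mono (min_le_right b d) hd))
    (hp.lineAt_lt_of_linkedLeft hL h hb hd) (hp.lineAt_lt_of_linkedRight hR h hb hd)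

theorem eq_of_mem_seg_of_mem_seg (hp : PolyPts n ε p) (hab : a < b) (hcd : c < d)
    (hd : d ≤ n + 2) (hbc : b ≤ c) {z : ℂ} (h₁ : z ∈ Seg p (a, b)) (h₂ : z ∈ Seg p (c, d)) :
    z = p b ∧ z = p c := by
  have hab' := hp.1 a b hab (by omega)
  obtain ⟨⟨-, z_le⟩, z_im⟩ := (mem_seg_iff hab').1 h₁
  obtain ⟨⟨le_z, -⟩, -⟩ := (mem_seg_iff (hp.1 c d hcd hd)).1 h₂
  obtain rfl : b = c := by
    by_contra hne
    have := hp.1 b c (by omega) (by omega)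
    linarith
  have z_re : z.re = (p b).re := le_antisymm z_le le_z
  rw [z_re, lineAt_right hab'] at z_im
  exact ⟨Complex.ext z_re z_im, Complex.ext z_re z_im⟩

theorem max_lt_min_of_cross (hp : PolyPts n ε p) (hab : a < b) (hb : b ≤ n + 2) (hcd : c < d)
    (hd : d ≤ n + 2) (h : Cross p (a, b) (c, d)) : max a c < min b d := by
  obtain ⟨z, hz₁, hz₂, hz⟩ := h
  by_contra hlt
  obtain hbc | hda : b ≤ c ∨ d ≤ a := by omega
  · have := hp.eq_of_mem_seg_of_mem_seg hab hcd hd hbc hz₁ hz₂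
    exact hz ⟨.inr this.1, .inl this.2⟩
  · have := hp.eq_of_mem_seg_of_mem_seg hcd hab hb hda hz₂ hz₁
    exact hz ⟨.inl this.2, .inr this.1⟩

end PolyPts

end Geometry

/-- for a non-split sequence `0 → M₁ → E → M₂ → 0` with `M₁ = M(a+1,b)`,
`M₂ = M(c+1,d)`, TFAE: `Hom(M₁,M₂) ≠ 0`; `E` decomposable; `γ(a,b)` and `γ(c,d)` cross
and the slope of `γ(c,d)` is larger than the slope of `γ(a,b)`. -/
theorem stmt_14 (k : Type) [Field k] (n : ℕ) (ε : ℕ → Bool) (p : ℕ → ℂ)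
    (hp : PolyPts n ε p) (a b c d : ℕ)
    (hab : a < b) (hb : b ≤ n + 2) (hcd : c < d) (hd : d ≤ n + 2)
    (σ : SES (intervalRep k n ε (a + 1) b) (intervalRep k n ε (c + 1) d))
    (hns : ¬σ.Splits) :
    ((∃ f : (intervalRep k n ε (a + 1) b).Hom (intervalRep k n ε (c + 1) d),
        ∃ x v, f.app x v ≠ 0) ↔
      (∃ A B : ARep k n ε, ¬A.IsZero ∧ ¬B.IsZero ∧ σ.E.Iso (A.dsum B))) ∧
    ((∃ A B : ARep k n ε, ¬A.IsZero ∧ ¬B.IsZero ∧ σ.E.Iso (A.dsum B)) ↔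
      (Cross p (a, b) (c, d) ∧ slope p (a, b) < slope p (c, d))) := by
  have hL := σ.linkedLeft_of_not_splits hns
  have hR := σ.linkedRight_of_not_splits hns
  have hom_iff : (∃ f : (intervalRep k n ε (a + 1) b).Hom (intervalRep k n ε (c + 1) d),
      ∃ x v, f.app x v ≠ 0) ↔ max a c < min b d :=
    ⟨fun ⟨_, _, _, hv⟩ => max_lt_min_of_hom_ne_zero hv,
      fun h => exists_hom_ne_zero_of_linked hL hR h (by omega)⟩
  have decomposition_iff := σ.exists_decomposition_iff hns hab hb hcd hd
  have cross_iff : (Cross p (a, b) (c, d) ∧ slope p (a, b) < slope p (c, d)) ↔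
      max a c < min b d :=
    ⟨fun h => hp.max_lt_min_of_cross hab hb hcd hd h.1,
      fun h => hp.cross_and_slope_lt_of_linked hL hR h hb hd⟩
  exact ⟨hom_iff.trans decomposition_iff.symm, decomposition_iff.trans cross_iff.symm⟩

end CambrianA
end
end
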